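/- arXiv:math/0201003 — 2 statements merged into one kernel-verified Lean document; each statement's English description precedes it below -/
import Mathlib

section
/- Let k ≥ 2 be an integer and λ a partition. Then λ has empty k-core if and only if, for each i ∈ {1,…,k}, the intrinsic median of the i-th subsequence (mod k) of s(λ) coincides with the median of s(λ) (where the i-th subsequence consists of every k-th digit of s(λ), including the i-th digit after the median of s(λ), and inherits gaps between its digits from s(λ)). -/
open scoped BigOperators

namespace RimHookPaper

/-- A partition: a weakly decreasing, eventually-zero sequence of naturals;
`parts n` is the `(n+1)`-st part. -/
structure Partition : Type where
  parts : ℕ → ℕ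
  antitone : ∀ ⦃i j : ℕ⦄, i ≤ j → parts j ≤ parts i
  eventually_zero : ∃ N : ℕ, ∀ i : ℕ, N ≤ i → parts i = 0

namespace Partition

/-- The size `|λ|` of a partition. -/
noncomputable def size (P : Partition) : ℕ := ∑ᶠ i, P.parts i

/-- The empty partition. -/
def empty : Partition := ⟨fun _ => 0, fun _ _ _ => le_rfl, ⟨0, fun _ _ => rfl⟩⟩

/-- The number of nonzero parts of a partition. -/
noncomputable def length (P : Partition) : ℕ := sInf {N | P.parts N = 0}

/-- The cells of the Young diagram of a partition. -/
def cells (P : Partition) : Set (ℕ × ℕ) := {c | c.2 < P.parts c.1}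

instance : LE Partition := ⟨fun Q P => ∀ i, Q.parts i ≤ P.parts i⟩

/-- The skew shape `P / Q` (as a set of cells). -/
def skew (P Q : Partition) : Set (ℕ × ℕ) := P.cells \ Q.cells

end Partition

/-- Edge-adjacency of cells. -/
def Adj (c d : ℕ × ℕ) : Prop :=
  (c.1 = d.1 ∧ (c.2 + 1 = d.2 ∨ d.2 + 1 = c.2)) ∨
    (c.2 = d.2 ∧ (c.1 + 1 = d.1 ∨ d.1 + 1 = c.1))

/-- A set of cells is (edge-)connected. -/
def IsConnectedSet (S : Set (ℕ × ℕ)) : Prop :=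
  ∀ c ∈ S, ∀ d ∈ S, Relation.ReflTransGen (fun x y => x ∈ S ∧ y ∈ S ∧ Adj x y) c d

/-- `S` contains no 2×2 square. -/
def NoSquare (S : Set (ℕ × ℕ)) : Prop :=
  ¬ ∃ i j : ℕ, (i, j) ∈ S ∧ (i + 1, j) ∈ S ∧ (i, j + 1) ∈ S ∧ (i + 1, j + 1) ∈ S

/-- `P / Q` is a rim hook (border strip) of length `t`: a nonempty connected skew
shape with no 2×2 square, consisting of `t` boxes. -/
def IsRimHook (P Q : Partition) (t : ℕ) : Prop :=
  Q ≤ P ∧ (P.skew Q).Nonempty ∧ IsConnectedSet (P.skew Q) ∧ NoSquare (P.skew Q) ∧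
    (P.skew Q).ncard = t

/-- One step of a rim hook tableau: an empty hook (`t = 0`) or a rim hook of length `t`. -/
def IsStep (P Q : Partition) (t : ℕ) : Prop :=
  (t = 0 ∧ P = Q) ∨ (0 < t ∧ IsRimHook P Q t)

/-- Number of rows met by a set of cells. -/
noncomputable def rowCount (S : Set (ℕ × ℕ)) : ℕ := (Prod.fst '' S).ncard

/-- A rim hook tableau of shape `P` and type `μ`: a chain
`∅ = λ⁰ ⊆ λ¹ ⊆ ⋯ ⊆ λʳ = P` with each `λⁱ/λⁱ⁻¹` a (possibly empty)
rim hook of length `μᵢ`. -/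
structure RHT (P : Partition) (μ : List ℕ) : Type where
  chain : Fin (μ.length + 1) → Partition
  chain_zero : chain 0 = Partition.empty
  chain_last : chain (Fin.last μ.length) = P
  step : ∀ j : Fin μ.length, IsStep (chain j.succ) (chain j.castSucc) (μ.get j)

/-- The total height of a rim hook tableau: the sum of the heights
(number of rows minus one) of its nonempty rim hooks. -/
noncomputable def RHT.height {P : Partition} {μ : List ℕ} (T : RHT P μ) : ℕ :=
  ∑ j : Fin μ.length, (rowCount ((T.chain j.succ).skew (T.chain j.castSucc)) - 1)

/-- The character value `χ^λ_μ` of the symmetric group, via the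
Murnaghan–Nakayama rule. -/
noncomputable def chiAux (P : Partition) (μ : List ℕ) : ℤ :=
  ∑ᶠ T : RHT P μ, (-1 : ℤ) ^ T.height

/-- The parts of a multiset, listed in weakly decreasing order. -/
def typeList (μ : Multiset ℕ) : List ℕ := (μ.sort (· ≤ ·)).reverse

/-- `χ^λ_μ` for a multiset type `μ`. -/
noncomputable def chi (P : Partition) (μ : Multiset ℕ) : ℤ := chiAux P (typeList μ)

/-- `z_μ = ∏_j m_j! · j^{m_j}` where `μ` has `m_j` parts equal to `j`. -/
def zpart (μ : Multiset ℕ) : ℕ := μ.prod * ∏ j ∈ μ.toFinset, (μ.count j).factorial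

/-- `χ^λ(σ)`: the character evaluated at a permutation, via its full cycle type
(including fixed points as parts equal to 1). -/
noncomputable def chiPerm (P : Partition) {m : ℕ} (σ : Equiv.Perm (Fin m)) : ℤ :=
  chi P (σ.cycleType + Multiset.replicate (m - σ.cycleType.sum) 1)

/-- Position of the zero (up step) corresponding to row `n` in the 0/1 sequence
`s(P)`, where the median of `s(P)` is the gap just below position `0`. -/
def zpos (P : Partition) (n : ℕ) : ℤ := (P.parts n : ℤ) - (n : ℤ) - 1

/-- `s(P)` has a `0` (an up step) at position `x`; otherwise it has a `1`. -/
def isZeroAt (P : Partition) (x : ℤ) : Prop := ∃ n : ℕ, zpos P n = x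

/-- `Q` is the `k`-quotient of `P`: for each residue `i`, the 0/1 sequence of `Q i`
is (up to the shift `d` recording the position of its median) the subsequence of
`s(P)` consisting of every `k`-th digit, including the `(i+1)`-st digit after the
median of `s(P)`. -/
def IsKQuotient (k : ℕ) (P : Partition) (Q : Fin k → Partition) : Prop :=
  ∀ i : Fin k, ∃ d : ℤ, ∀ j : ℤ,
    isZeroAt (Q i) j ↔ isZeroAt P (((i : ℕ) : ℤ) + (j + d) * (k : ℤ))

/-- `C` is the `k`-core of `P`: it is obtained from `P` by successively removing
rim hooks of length `k`, as long as possible. -/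
def IsKCore (k : ℕ) (P C : Partition) : Prop :=
  Relation.ReflTransGen (fun A B => IsRimHook A B k) P C ∧ ¬ ∃ C', IsRimHook C C' k

/-- The map on row indices induced by moving the zero in row `m` down (left)
to row `m'`, the zeros in rows `m+1,…,m'` each moving up one row. -/
def cycleFun (m m' n : ℕ) : ℕ :=
  if n = m then m' else if m < n ∧ n ≤ m' then n - 1 else n

/-- One tracking step for the zero permutation: passing from `A` to `B` by removing
a rim hook, encoded on the 0/1 sequence as interchanging a `1` with a later `0`
(the moved zero, in row `m` of `A`, jumps over `m' - m` zeros, landing in row `m'`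
of `B`); the row of each labeled zero is updated by `cycleFun m m'`. -/
def StepTrack (A B : Partition) (f g : ℕ → ℕ) : Prop :=
  (A = B ∧ g = f) ∨
    ∃ m m' : ℕ, m ≤ m' ∧
      (∀ n, n < m → zpos B n = zpos A n) ∧
      (∀ n, m ≤ n → n < m' → zpos B n = zpos A (n + 1)) ∧
      (∀ n, m' < n → zpos B n = zpos A n) ∧
      g = fun i => cycleFun m m' (f i)

/-- `π` is the zero permutation of the rim hook tableau `T`: label the zeros of
`s(P)` succeeding the first one by `1,…,ℓ(P)` from left to right (`q j i` is the
row of label `i+1` at stage `j` of the peeling, rows counted from the top), peel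
the rim hooks of `T` in order of decreasing entries, and read off the labels in
the final sequence `s(∅)` from left to right. -/
def IsZeroPerm {P : Partition} {μ : List ℕ} (T : RHT P μ)
    (π : Equiv.Perm (Fin P.length)) : Prop :=
  ∃ q : Fin (μ.length + 1) → ℕ → ℕ,
    (∀ i : ℕ, i < P.length → q (Fin.last μ.length) i = P.length - 1 - i) ∧
    (∀ j : Fin μ.length,
      StepTrack (T.chain j.succ) (T.chain j.castSucc) (q j.succ) (q j.castSucc)) ∧
    (∀ i : Fin P.length, q 0 ((π i : ℕ)) = P.length - 1 - (i : ℕ))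

/-- `ω(T) = (T₁,…,T_k)`: the rim hook tableau `T` (all of whose hook lengths are
divisible by `k`) decomposes into the `k`-tuple of rim hook tableaux `Ti` on the
`k`-quotient: each step of `T`, removing a hook of length `k·t`, affects exactly
one subsequence (mod `k`) of the 0/1 sequence, i.e. removes a hook of length `t`
from exactly one of the quotient partitions. -/
def OmegaRel (k : ℕ) {P : Partition} {κ : List ℕ} (T : RHT P κ)
    {Q : Fin k → Partition} {ν : Fin k → List ℕ}
    (Ti : ∀ i : Fin k, RHT (Q i) (ν i)) : Prop :=
  ∃ (QC : Fin (κ.length + 1) → Fin k → Partition) (a : Fin κ.length → Fin k),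
    (∀ j, IsKQuotient k (T.chain j) (QC j)) ∧
    (∀ j : Fin κ.length, ∀ i, i ≠ a j → QC j.castSucc i = QC j.succ i) ∧
    (∀ j : Fin κ.length, ∃ t : ℕ, κ.get j = k * t ∧
      IsStep (QC j.succ (a j)) (QC j.castSucc (a j)) t) ∧
    (∀ i : Fin k, ∃ e : Fin (ν i).length → Fin κ.length,
      StrictMono e ∧ (∀ s, a (e s) = i) ∧ (∀ j, a j = i → ∃ s, e s = j) ∧
      (∀ s, k * (ν i).get s = κ.get (e s)) ∧
      (Ti i).chain 0 = QC 0 i ∧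
      (∀ s : Fin (ν i).length, (Ti i).chain s.succ = QC (Fin.succ (e s)) i))

/-!
Read as a set of integers, the zeros of `s(P)` form a Maya diagram, and removing a rim hook of
length `k` moves one zero from a position `x` to an unoccupied position `x - k`. On the subsequence
(mod `k`) through `x` this is a move by one place, and the other subsequences do not change; so the
charge of each subsequence, which measures how far its intrinsic median lies from the median of
`s(P)`, is an invariant of the `k`-core. A partition is a `k`-core when no such move is possible,
which means that in each subsequence all zeros come before all ones. Such a sequence is determined
by its charge, so the only `k`-core all of whose charges vanish is the empty partition.
-/

section Maya

variable {Z W : Set ℤ} {a b i k x : ℤ}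

/-- A Maya diagram: a set of integers (the positions of the zeros of a doubly infinite 0/1 sequence)
that contains all sufficiently small integers and no sufficiently large one. -/
def IsMaya (Z : Set ℤ) : Prop :=
  BddAbove Z ∧ BddBelow Zᶜ

/-- The charge of a Maya diagram: the number of zeros after the gap below `0` minus the number of
ones before it. It vanishes if and only if the median is that gap. The value is meaningful only when
both sets are finite, as they are for `IsMaya Z`. -/
noncomputable def charge (Z : Set ℤ) : ℤ :=
  (Set.Ici 0 ∩ Z).ncard - (Set.Iio 0 \ Z).ncard

/-- The set of zeros of the subsequence formed by every `k`-th digit of the 0/1 sequence with zeros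
`Z`, including the one at position `i`. When `0 ≤ i < k`, the indexing is such that the gap below
`0` in the sequence is inherited as the gap below `0` in the subsequence. -/
def subsequence (k i : ℤ) (Z : Set ℤ) : Set ℤ :=
  {j | i + j * k ∈ Z}

theorem mem_subsequence {j : ℤ} : j ∈ subsequence k i Z ↔ i + j * k ∈ Z :=
  Iff.rfl

theorem charge_eq_zero_iff : charge Z = 0 ↔ (Set.Iio 0 \ Z).ncard = (Set.Ici 0 ∩ Z).ncard := by
  rw [charge, sub_eq_zero, Nat.cast_inj, eq_comm]

theorem charge_Iio_zero : charge (Set.Iio 0) = 0 := by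
  simp [charge_eq_zero_iff, Set.Ici_inter_Iio]

namespace IsMaya

theorem finite_Ici_inter (hZ : IsMaya Z) : (Set.Ici 0 ∩ Z).Finite := by
  obtain ⟨M, hM⟩ := hZ.1
  exact (Set.finite_Icc 0 M).subset fun x hx ↦ ⟨hx.1, hM hx.2⟩

theorem finite_Iio_sdiff (hZ : IsMaya Z) : (Set.Iio 0 \ Z).Finite := by
  obtain ⟨m, hm⟩ := hZ.2
  exact (Set.finite_Ico m 0).subset fun x hx ↦ ⟨hm hx.2, hx.1⟩

theorem sdiff_singleton (hZ : IsMaya Z) (a : ℤ) : IsMaya (Z \ {a}) :=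
  ⟨hZ.1.mono Set.sdiff_subset, by
    rw [Set.compl_sdiff]
    exact bddBelow_singleton.union hZ.2⟩

theorem charge_insert (hZ : IsMaya Z) (hb : b ∉ Z) : charge (insert b Z) = charge Z + 1 := by
  unfold charge
  rcases le_or_gt 0 b with h | h
  · have hpos : Set.Ici 0 ∩ insert b Z = insert b (Set.Ici 0 ∩ Z) :=
      Set.inter_insert_of_mem h
    have hneg : Set.Iio 0 \ insert b Z = Set.Iio 0 \ Z := by
      grind
    rw [hpos, hneg, Set.ncard_insert_of_notMem (fun hb' ↦ hb hb'.2) hZ.finite_Ici_inter]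
    push_cast
    ring
  · have hpos : Set.Ici 0 ∩ insert b Z = Set.Ici 0 ∩ Z :=
      Set.inter_insert_of_notMem h.not_ge
    have hneg : Set.Iio 0 \ Z = insert b (Set.Iio 0 \ insert b Z) := by
      grind
    have hfin : (Set.Iio 0 \ insert b Z).Finite :=
      hZ.finite_Iio_sdiff.subset (Set.sdiff_subset_sdiff_right (Set.subset_insert b Z))
    rw [hpos, hneg, Set.ncard_insert_of_notMem (fun hb' ↦ hb'.2 (Set.mem_insert b Z)) hfin]
    push_cast
    ring

theorem charge_insert_sdiff_singleton (hZ : IsMaya Z) (ha : a ∈ Z) (hb : b ∉ Z) :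
    charge (insert b (Z \ {a})) = charge Z := by
  have hZa := hZ.sdiff_singleton a
  calc charge (insert b (Z \ {a}))
      = charge (Z \ {a}) + 1 := hZa.charge_insert fun h ↦ hb h.1
    _ = charge (insert a (Z \ {a})) := (hZa.charge_insert fun h ↦ h.2 rfl).symm
    _ = charge Z := by rw [Set.insert_sdiff_singleton, Set.insert_eq_of_mem ha]

theorem eq_Iio_zero_of_charge_eq_zero (hZ : IsMaya Z) (hpred : ∀ x ∈ Z, x - 1 ∈ Z)
    (hcharge : charge Z = 0) : Z = Set.Iio 0 := by
  have hlower : IsLowerSet Z := fun y x hxy hy ↦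
    Int.leInductionDown hy (fun n _ ↦ hpred n) x hxy
  rw [charge_eq_zero_iff] at hcharge
  have hpos : Set.Ici 0 ∩ Z = ∅ := by
    by_contra hne
    obtain ⟨x, hx0, hx⟩ := Set.nonempty_iff_ne_empty.2 hne
    have hneg : Set.Iio 0 \ Z = ∅ :=
      Set.sdiff_eq_empty.2 fun y hy ↦ hlower (hy.le.trans hx0) hx
    rw [hneg, Set.ncard_empty] at hcharge
    exact hne ((Set.ncard_eq_zero hZ.finite_Ici_inter).1 hcharge.symm)
  rw [hpos, Set.ncard_empty, Set.ncard_eq_zero hZ.finite_Iio_sdiff, Set.sdiff_eq_empty] at hcharge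
  have hsub : Z ⊆ Set.Iio 0 := fun x hx ↦
    Set.mem_Iio.2 (not_le.1 fun hx0 ↦ hpos.subset ⟨hx0, hx⟩)
  exact hsub.antisymm hcharge

protected theorem subsequence (hZ : IsMaya Z) (hk : 0 < k) (i : ℤ) :
    IsMaya (subsequence k i Z) := by
  obtain ⟨⟨M, hM⟩, m, hm⟩ := hZ
  refine ⟨⟨(M - i) / k, fun j hj ↦ ?_⟩, ⟨(m - i) / k, fun j hj ↦ ?_⟩⟩
  · exact Int.le_ediv_of_mul_le hk (by linarith [hM hj])
  · exact Int.ediv_le_of_le_mul hk (by linarith [hm hj])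

theorem charge_subsequence_insert_sdiff_singleton (hZ : IsMaya Z) (hk : 0 < k) (hx : x ∈ Z)
    (hxk : x - k ∉ Z) (i : ℤ) :
    charge (subsequence k i (insert (x - k) (Z \ {x}))) = charge (subsequence k i Z) := by
  by_cases hi : ∃ a, x = i + a * k
  · obtain ⟨a, rfl⟩ := hi
    have hmove : i + a * k - k = i + (a - 1) * k := by ring
    rw [hmove] at hxk ⊢
    have hsub : subsequence k i (insert (i + (a - 1) * k) (Z \ {i + a * k})) =
        insert (a - 1) (subsequence k i Z \ {a}) := by
      ext j
      simp [mem_subsequence, hk.ne']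
    rw [hsub]
    exact (hZ.subsequence hk i).charge_insert_sdiff_singleton hx hxk
  · have hsub : subsequence k i (insert (x - k) (Z \ {x})) = subsequence k i Z := by
      ext j
      have h₁ : i + j * k ≠ x := fun h ↦ hi ⟨j, h.symm⟩
      have h₂ : i + j * k ≠ x - k := fun h ↦ hi ⟨j + 1, by linarith⟩
      simp [mem_subsequence, h₁, h₂]
    rw [hsub]

end IsMaya

theorem subsequence_Iio_zero (hi : 0 ≤ i) (hik : i < k) :
    subsequence k i (Set.Iio 0) = Set.Iio 0 := by
  ext j
  simp only [mem_subsequence, Set.mem_Iio]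
  constructor <;> intro h <;> nlinarith

theorem eq_of_forall_subsequence_eq (hk : 0 < k)
    (h : ∀ i, 0 ≤ i → i < k → subsequence k i Z = subsequence k i W) : Z = W := by
  ext x
  have hx := Set.ext_iff.1 (h (x % k) (x.emod_nonneg hk.ne') (x.emod_lt_of_pos hk)) (x / k)
  rwa [mem_subsequence, mem_subsequence, Int.emod_add_ediv_mul] at hx

end Maya

namespace Partition

variable {P Q : Partition}

theorem zpos_strictAnti (P : Partition) : StrictAnti (zpos P) :=
  strictAnti_nat_of_succ_lt fun n ↦ by
    have := P.antitone n.le_succ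
    unfold zpos
    grind

/-- The Maya diagram of a partition: the set of positions of the zeros of `s(P)`. -/
def zeros (P : Partition) : Set ℤ :=
  Set.range (zpos P)

theorem zeros_injective : Function.Injective zeros := fun P Q h ↦ by
  have hz : zpos P = zpos Q :=
    (P.zpos_strictAnti.dual_right.range_inj Q.zpos_strictAnti.dual_right).1 h
  have hparts : P.parts = Q.parts := funext fun n ↦ by
    have := congrFun hz n
    unfold zpos at this
    omega
  cases P
  cases Q
  congr

theorem zeros_empty : empty.zeros = Set.Iio 0 := by
  ext x
  constructor
  · rintro ⟨n, rfl⟩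
    simp only [zpos, empty, Set.mem_Iio]
    omega
  · intro hx
    rw [Set.mem_Iio] at hx
    exact ⟨(-x - 1).toNat, by simp only [zpos, empty]; omega⟩

theorem isMaya_zeros (P : Partition) : IsMaya P.zeros := by
  constructor
  · refine ⟨zpos P 0, ?_⟩
    rintro _ ⟨n, rfl⟩
    exact P.zpos_strictAnti.antitone n.zero_le
  · obtain ⟨N, hN⟩ := P.eventually_zero
    refine ⟨-N, fun x hx ↦ not_lt.1 fun hxN ↦ hx ⟨(-x - 1).toNat, ?_⟩⟩
    have := hN (-x - 1).toNat (by omega)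
    unfold zpos
    omega

theorem exists_zpos_succ_lt_lt_zpos {m : ℕ} {y : ℤ} (hym : y < zpos P m) (hy : y ∉ P.zeros) :
    ∃ m', m ≤ m' ∧ zpos P (m' + 1) < y ∧ y < zpos P m' := by
  classical
  have hex : ∃ n, zpos P n < y := by
    obtain ⟨N, hN⟩ := P.eventually_zero
    refine ⟨N + y.natAbs, ?_⟩
    have := hN (N + y.natAbs) (by omega)
    unfold zpos
    omega
  have hm : m < Nat.find hex :=
    P.zpos_strictAnti.lt_iff_gt.1 ((Nat.find_spec hex).trans hym)
  obtain ⟨m', hm'⟩ := Nat.exists_eq_add_one_of_ne_zero (Nat.ne_zero_of_lt hm)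
  refine ⟨m', by omega, hm' ▸ Nat.find_spec hex, ?_⟩
  exact lt_of_le_of_ne (not_lt.1 (Nat.find_min hex (by omega))) fun h ↦ hy ⟨m', h.symm⟩

theorem mem_skew {n c : ℕ} : (n, c) ∈ P.skew Q ↔ Q.parts n ≤ c ∧ c < P.parts n := by
  simp only [skew, cells, Set.mem_sdiff, Set.mem_ofPred_eq, not_lt]
  exact and_comm

theorem cells_finite (P : Partition) : P.cells.Finite := by
  obtain ⟨N, hN⟩ := P.eventually_zero
  refine ((Set.finite_Iio N).prod (Set.finite_Iio (P.parts 0))).subset ?_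
  rintro ⟨n, c⟩ (hc : c < P.parts n)
  have hn : ¬ N ≤ n := fun h ↦ by simp [hN n h] at hc
  exact ⟨not_le.1 hn, hc.trans_le (P.antitone n.zero_le)⟩

theorem ncard_skew_eq_sum {s : Finset ℕ} (hs : ∀ n ∉ s, P.parts n ≤ Q.parts n) :
    (P.skew Q).ncard = ∑ n ∈ s, (P.parts n - Q.parts n) := by
  have hskew : P.skew Q = ((s.sigma fun n ↦ Finset.Ico (Q.parts n) (P.parts n)).map
      (Equiv.sigmaEquivProd ℕ ℕ).toEmbedding : Finset (ℕ × ℕ)) := by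
    ext ⟨n, c⟩
    have hn : (n, c) ∈ P.skew Q → n ∈ s := fun h ↦ by_contra fun hns ↦
      ((mem_skew.1 h).1.trans_lt (mem_skew.1 h).2).not_ge (hs n hns)
    rw [mem_skew] at hn
    simp only [mem_skew, Finset.mem_coe, Finset.mem_map_equiv, Finset.mem_sigma, Finset.mem_Ico]
    exact ⟨fun h ↦ ⟨hn h, h⟩, And.right⟩
  rw [hskew, Set.ncard_coe_finset, Finset.card_map, Finset.card_sigma]
  simp only [Nat.card_Ico]

end Partition

section Connected

variable {S : Set (ℕ × ℕ)}

theorem isConnectedSet_of_forall_reflTransGen {c₀ : ℕ × ℕ}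
    (h : ∀ c ∈ S, Relation.ReflTransGen (fun x y ↦ x ∈ S ∧ y ∈ S ∧ Adj x y) c c₀) :
    IsConnectedSet S := by
  have hsymm : Std.Symm fun x y ↦ x ∈ S ∧ y ∈ S ∧ Adj x y :=
    ⟨fun x y ⟨hx, hy, hxy⟩ ↦ ⟨hy, hx, by unfold Adj at *; omega⟩⟩
  exact fun c hc d hd ↦ (h c hc).trans (Relation.ReflTransGen.stdSymm.symm _ _ (h d hd))

theorem IsConnectedSet.exists_mem_row_and_mem_row_succ (hS : IsConnectedSet S) {c d : ℕ × ℕ}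
    (hc : c ∈ S) (hd : d ∈ S) {r : ℕ} (hcr : c.1 ≤ r) (hrd : r < d.1) :
    ∃ j, (r, j) ∈ S ∧ (r + 1, j) ∈ S := by
  by_contra! hcross
  have hrow (x y : ℕ × ℕ) (hx : x ∈ S) (hy : y ∈ S) (hxy : Adj x y) (hxr : x.1 ≤ r) : y.1 ≤ r := by
    obtain ⟨x₁, x₂⟩ := x
    obtain ⟨y₁, y₂⟩ := y
    simp only [Adj] at *
    by_contra hyr
    obtain ⟨rfl, rfl, rfl⟩ : x₁ = r ∧ y₁ = r + 1 ∧ y₂ = x₂ := by omega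
    exact hcross _ hx hy
  have hdr : d.1 ≤ r := by
    have hpath := hS c hc d hd
    clear hrd hd
    induction hpath with
    | refl => exact hcr
    | tail _ hxy ih => exact hrow _ _ hxy.1 hxy.2.1 hxy.2.2 ih
  exact hrd.not_ge hdr

end Connected

/-- `P / Q` is a border strip with top row `m` and bottom row `m'`: in each of these rows except the
last, `Q` is one box shorter than the next row of `P`. This row-by-row description of rim hooks is
related to the geometric one by `isRimHook_iff_exists_isBorderStrip`. -/
structure IsBorderStrip (P Q : Partition) (m m' : ℕ) : Prop where
  le : m ≤ m'
  parts_eq : ∀ n, n < m ∨ m' < n → Q.parts n = P.parts n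
  parts_add_one : ∀ n, m ≤ n → n < m' → Q.parts n + 1 = P.parts (n + 1)
  parts_last_lt : Q.parts m' < P.parts m'

namespace IsBorderStrip

variable {P Q : Partition} {m m' n : ℕ}

theorem parts_lt (h : IsBorderStrip P Q m m') (hmn : m ≤ n) (hnm' : n ≤ m') :
    Q.parts n < P.parts n := by
  rcases hnm'.eq_or_lt with rfl | hlt
  · exact h.parts_last_lt
  · have := h.parts_add_one n hmn hlt
    have := P.antitone n.le_succ
    grind

theorem parts_le (h : IsBorderStrip P Q m m') (n : ℕ) : Q.parts n ≤ P.parts n := by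
  by_cases hn : n < m ∨ m' < n
  · exact (h.parts_eq n hn).le
  · exact (h.parts_lt (by omega) (by omega)).le

theorem mem_Icc_of_mem_skew (h : IsBorderStrip P Q m m') {c : ℕ} (hc : (n, c) ∈ P.skew Q) :
    n ∈ Set.Icc m m' := by
  rw [Partition.mem_skew] at hc
  have := h.parts_eq n
  grind

theorem zpos_eq (h : IsBorderStrip P Q m m') (hn : n < m ∨ m' < n) : zpos Q n = zpos P n := by
  rw [zpos, zpos, h.parts_eq n hn]

theorem zpos_eq_succ (h : IsBorderStrip P Q m m') (hmn : m ≤ n) (hnm' : n < m') :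
    zpos Q n = zpos P (n + 1) := by
  have := h.parts_add_one n hmn hnm'
  unfold zpos
  omega

theorem zpos_last_lt (h : IsBorderStrip P Q m m') : zpos Q m' < zpos P m' := by
  have := h.parts_last_lt
  unfold zpos
  omega

theorem ncard_skew (h : IsBorderStrip P Q m m') :
    ((P.skew Q).ncard : ℤ) = zpos P m - zpos Q m' := by
  have hrows : ∀ n ∉ Finset.Ico m (m' + 1), P.parts n ≤ Q.parts n := fun n hn ↦
    (h.parts_eq n (by rw [Finset.mem_Ico] at hn; omega)).ge
  have hcast : ∀ n ∈ Finset.Ico m (m' + 1),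
      ((P.parts n - Q.parts n : ℕ) : ℤ) = zpos P n - zpos Q n := fun n hn ↦ by
    rw [Finset.mem_Ico] at hn
    have := h.parts_lt (n := n) (by omega) (by omega)
    unfold zpos
    omega
  have htelescope : ∀ n ∈ Finset.Ico m m',
      zpos P n - zpos Q n = -(zpos P (n + 1) - zpos P n) := fun n hn ↦ by
    rw [Finset.mem_Ico] at hn
    rw [h.zpos_eq_succ hn.1 hn.2, neg_sub]
  rw [Partition.ncard_skew_eq_sum hrows, Nat.cast_sum, Finset.sum_congr rfl hcast,
    Finset.sum_Ico_succ_top h.le, Finset.sum_congr rfl htelescope, Finset.sum_neg_distrib,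
    Finset.sum_Ico_sub _ h.le]
  ring

theorem zpos_last_notMem_zeros (h : IsBorderStrip P Q m m') : zpos Q m' ∉ P.zeros := by
  rintro ⟨n, hn⟩
  refine P.zpos_strictAnti.antitone.ne_of_lt_of_lt_nat m' ?_ h.zpos_last_lt n hn
  rw [← h.zpos_eq (Or.inr m'.lt_succ_self)]
  exact Q.zpos_strictAnti m'.lt_succ_self

theorem zeros_eq_insert (h : IsBorderStrip P Q m m') :
    Q.zeros = insert (zpos Q m') (P.zeros \ {zpos P m}) := by
  have hm := h.le
  ext x
  constructor
  · rintro ⟨n, rfl⟩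
    have hmem {j : ℕ} (hj : j ≠ m) : zpos P j ∈ P.zeros \ {zpos P m} :=
      ⟨⟨j, rfl⟩, P.zpos_strictAnti.injective.ne hj⟩
    rcases eq_or_ne n m' with rfl | hn
    · exact Set.mem_insert _ _
    refine Set.mem_insert_of_mem _ ?_
    by_cases hout : n < m ∨ m' < n
    · rw [h.zpos_eq hout]
      exact hmem (by omega)
    · rw [h.zpos_eq_succ (by omega) (by omega)]
      exact hmem (by omega)
  · rintro (rfl | ⟨⟨n, rfl⟩, hn⟩)
    · exact ⟨m', rfl⟩
    have hnm : n ≠ m := fun hnm ↦ hn (congrArg (zpos P) hnm)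
    by_cases hout : n < m ∨ m' < n
    · exact ⟨n, h.zpos_eq hout⟩
    · obtain ⟨j, rfl⟩ := Nat.exists_eq_add_one_of_ne_zero (show n ≠ 0 by omega)
      exact ⟨j, h.zpos_eq_succ (by omega) (by omega)⟩

theorem noSquare (h : IsBorderStrip P Q m m') : NoSquare (P.skew Q) := by
  rintro ⟨n, j, hnj, -, -, hdiag⟩
  have hn := h.mem_Icc_of_mem_skew hnj
  have hn' := h.mem_Icc_of_mem_skew hdiag
  have := h.parts_add_one n hn.1 hn'.2
  rw [Partition.mem_skew] at hnj hdiag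
  omega

theorem isConnectedSet (h : IsBorderStrip P Q m m') : IsConnectedSet (P.skew Q) := by
  have hleft (n c : ℕ) (hc : Q.parts n ≤ c) : c < P.parts n →
      Relation.ReflTransGen (fun x y ↦ x ∈ P.skew Q ∧ y ∈ P.skew Q ∧ Adj x y)
        (n, c) (n, Q.parts n) := by
    induction c, hc using Nat.le_induction with
    | base => exact fun _ ↦ .refl
    | succ c hc ih =>
      intro hcP
      exact .head ⟨Partition.mem_skew.2 ⟨by omega, hcP⟩, Partition.mem_skew.2 ⟨hc, by omega⟩,
        Or.inl ⟨rfl, Or.inr rfl⟩⟩ (ih (by omega))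
  have hdown (n : ℕ) (hnm' : n ≤ m') : m ≤ n →
      Relation.ReflTransGen (fun x y ↦ x ∈ P.skew Q ∧ y ∈ P.skew Q ∧ Adj x y)
        (n, Q.parts n) (m', Q.parts m') := by
    induction hnm' using Nat.decreasingInduction with
    | self => exact fun _ ↦ .refl
    | of_succ n hn ih =>
      intro hmn
      have hpart := h.parts_add_one n hmn hn
      have hQ := Q.antitone n.le_succ
      have hbelow : Q.parts n < P.parts (n + 1) := by omega
      exact .head ⟨Partition.mem_skew.2 ⟨le_rfl, h.parts_lt hmn hn.le⟩,
        Partition.mem_skew.2 ⟨hQ, hbelow⟩, Or.inr ⟨rfl, Or.inl rfl⟩⟩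
        ((hleft _ _ hQ hbelow).trans (ih (by omega)))
  refine isConnectedSet_of_forall_reflTransGen (c₀ := (m', Q.parts m')) fun ⟨n, c⟩ hc ↦ ?_
  have hn := h.mem_Icc_of_mem_skew hc
  rw [Partition.mem_skew] at hc
  exact (hleft n c hc.1 hc.2).trans (hdown n hn.2 hn.1)

theorem isRimHook (h : IsBorderStrip P Q m m') {k : ℕ} (hk : zpos P m = zpos Q m' + k) :
    IsRimHook P Q k := by
  have hlast : (m', Q.parts m') ∈ P.skew Q := Partition.mem_skew.2 ⟨le_rfl, h.parts_last_lt⟩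
  have hcard := h.ncard_skew
  exact ⟨h.parts_le, ⟨_, hlast⟩, h.isConnectedSet, h.noSquare, by omega⟩

end IsBorderStrip

theorem exists_isBorderStrip {P : Partition} {m m' r : ℕ} (hm : m ≤ m')
    (hr : P.parts (m' + 1) ≤ r) (hrP : r < P.parts m') :
    ∃ Q, IsBorderStrip P Q m m' ∧ Q.parts m' = r := by
  let parts (n : ℕ) : ℕ :=
    if n < m then P.parts n else if n < m' then P.parts (n + 1) - 1
    else if n = m' then r else P.parts n
  have hpos (n : ℕ) (hn : n ≤ m') : 0 < P.parts n := by
    have := P.antitone hn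
    omega
  have hanti : Antitone parts := antitone_nat_of_succ_le fun n ↦ by
    have h₁ := P.antitone n.le_succ
    have h₂ := P.antitone (n + 1).le_succ
    rcases eq_or_ne n m' with rfl | hn
    · grind
    rcases eq_or_ne (n + 1) m' with rfl | hn'
    · grind
    grind
  have hzero : ∃ N, ∀ n, N ≤ n → parts n = 0 := by
    obtain ⟨N, hN⟩ := P.eventually_zero
    exact ⟨N + m' + 1, fun n hn ↦ by grind⟩
  refine ⟨⟨parts, hanti, hzero⟩, ⟨hm, ?_, ?_, ?_⟩, ?_⟩ <;> grind

theorem IsRimHook.exists_isBorderStrip {P Q : Partition} {k : ℕ} (h : IsRimHook P Q k) :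
    ∃ m m', IsBorderStrip P Q m m' := by
  obtain ⟨hle, ⟨⟨n₀, c₀⟩, hc₀⟩, hconn, hsq, -⟩ := h
  let rows : Set ℕ := {n | Q.parts n < P.parts n}
  have hne : rows.Nonempty := by
    rw [Partition.mem_skew] at hc₀
    exact ⟨n₀, hc₀.1.trans_lt hc₀.2⟩
  have hbdd : BddAbove rows := by
    obtain ⟨N, hN⟩ := P.eventually_zero
    refine ⟨N, fun n (hn : Q.parts n < P.parts n) ↦ not_lt.1 fun hNn ↦ ?_⟩
    simp [hN n hNn.le] at hn
  have hmin : sInf rows ∈ rows := Nat.sInf_mem hne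
  have hmax : sSup rows ∈ rows := Nat.sSup_mem hne hbdd
  refine ⟨sInf rows, sSup rows, le_csSup hbdd hmin, fun n hn ↦ ?_, fun n hmn hnm' ↦ ?_, hmax⟩
  · have hrow : n ∉ rows := fun hrow ↦
      hn.elim (Nat.sInf_le hrow).not_gt (le_csSup hbdd hrow).not_gt
    exact (hle n).antisymm (not_lt.1 hrow)
  · obtain ⟨j, hj, hj'⟩ := hconn.exists_mem_row_and_mem_row_succ
      (Partition.mem_skew.2 ⟨le_rfl, hmin⟩) (Partition.mem_skew.2 ⟨le_rfl, hmax⟩) hmn hnm'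
    rw [Partition.mem_skew] at hj hj'
    by_contra hne'
    have hP := P.antitone n.le_succ
    have hQ := Q.antitone n.le_succ
    refine hsq ⟨n, Q.parts n, ?_⟩
    simp only [Partition.mem_skew]
    grind

theorem isRimHook_iff_exists_isBorderStrip {P Q : Partition} {k : ℕ} :
    IsRimHook P Q k ↔ ∃ m m', IsBorderStrip P Q m m' ∧ zpos P m = zpos Q m' + k := by
  constructor
  · intro h
    obtain ⟨m, m', hstrip⟩ := h.exists_isBorderStrip
    have hcard := hstrip.ncard_skew
    rw [h.2.2.2.2] at hcard
    exact ⟨m, m', hstrip, by omega⟩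
  · rintro ⟨m, m', hstrip, hk⟩
    exact hstrip.isRimHook hk

section RimHook

variable {P Q C : Partition} {k : ℕ}

theorem IsRimHook.exists_zeros_eq_insert (h : IsRimHook P Q k) :
    ∃ x ∈ P.zeros, x - k ∉ P.zeros ∧ Q.zeros = insert (x - k) (P.zeros \ {x}) := by
  obtain ⟨m, m', hstrip, hk⟩ := isRimHook_iff_exists_isBorderStrip.1 h
  have hlast : zpos P m - k = zpos Q m' := by omega
  refine ⟨zpos P m, ⟨m, rfl⟩, ?_⟩
  rw [hlast]
  exact ⟨hstrip.zpos_last_notMem_zeros, hstrip.zeros_eq_insert⟩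

theorem exists_isRimHook (hk : 0 < k) {x : ℤ} (hx : x ∈ P.zeros) (hxk : x - k ∉ P.zeros) :
    ∃ Q, IsRimHook P Q k := by
  obtain ⟨m, rfl⟩ := hx
  obtain ⟨m', hm, hlt, hgt⟩ := Partition.exists_zpos_succ_lt_lt_zpos (m := m) (by omega) hxk
  obtain ⟨r, hr⟩ := Int.eq_ofNat_of_zero_le (a := zpos P m - k + m' + 1) (by
    unfold zpos at *
    omega)
  obtain ⟨Q, hstrip, hQ⟩ := exists_isBorderStrip (P := P) (r := r) hm
    (by unfold zpos at *; omega) (by unfold zpos at *; omega)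
  have hlast : zpos Q m' = zpos P m - k := by
    rw [zpos, hQ]
    omega
  exact ⟨Q, hstrip.isRimHook (by omega)⟩

theorem IsRimHook.charge_subsequence_eq (h : IsRimHook P Q k) (hk : 0 < k) (i : ℤ) :
    charge (subsequence k i Q.zeros) = charge (subsequence k i P.zeros) := by
  obtain ⟨x, hx, hxk, hQ⟩ := h.exists_zeros_eq_insert
  rw [hQ]
  exact P.isMaya_zeros.charge_subsequence_insert_sdiff_singleton (mod_cast hk) hx hxk i

theorem IsRimHook.ncard_cells_lt (h : IsRimHook P Q k) : Q.cells.ncard < P.cells.ncard := by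
  obtain ⟨hle, ⟨c, hcP, hcQ⟩, -⟩ := h
  exact Set.ncard_lt_ncard ⟨fun d hd ↦ lt_of_lt_of_le hd (hle d.1), fun hPQ ↦ hcQ (hPQ hcP)⟩
    P.cells_finite

theorem exists_isKCore (k : ℕ) (P : Partition) : ∃ C, IsKCore k P C := by
  induction hn : P.cells.ncard using Nat.strong_induction_on generalizing P with
  | _ n ih =>
    by_cases hP : ∃ Q, IsRimHook P Q k
    · obtain ⟨Q, hPQ⟩ := hP
      obtain ⟨C, hQC, hC⟩ := ih _ (hn ▸ hPQ.ncard_cells_lt) Q rfl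
      exact ⟨C, .head hPQ hQC, hC⟩
    · exact ⟨P, .refl, hP⟩

theorem IsKCore.charge_subsequence_eq (h : IsKCore k P C) (hk : 0 < k) (i : ℤ) :
    charge (subsequence k i C.zeros) = charge (subsequence k i P.zeros) := by
  obtain ⟨hpath, -⟩ := h
  induction hpath with
  | refl => rfl
  | tail _ hstep ih => exact (hstep.charge_subsequence_eq hk i).trans ih

theorem eq_empty_of_charge_subsequence_eq_zero (hk : 0 < k) (hC : ¬ ∃ Q, IsRimHook C Q k)
    (hcharge : ∀ i : ℤ, 0 ≤ i → i < k → charge (subsequence k i C.zeros) = 0) :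
    C = Partition.empty := by
  have hk' : (0 : ℤ) < k := mod_cast hk
  have hmove (x : ℤ) (hx : x ∈ C.zeros) : x - k ∈ C.zeros :=
    by_contra fun hxk ↦ hC (exists_isRimHook hk hx hxk)
  refine Partition.zeros_injective (eq_of_forall_subsequence_eq hk' fun i hi hik ↦ ?_)
  rw [Partition.zeros_empty, subsequence_Iio_zero hi hik]
  refine (C.isMaya_zeros.subsequence hk' i).eq_Iio_zero_of_charge_eq_zero (fun j hj ↦ ?_)
    (hcharge i hi hik)
  rw [mem_subsequence, sub_one_mul, ← add_sub_assoc]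
  exact hmove _ hj

theorem isKCore_empty_iff (hk : 0 < k) :
    IsKCore k P Partition.empty ↔
      ∀ i : ℤ, 0 ≤ i → i < k → charge (subsequence k i P.zeros) = 0 := by
  constructor
  · intro h i hi hik
    rw [← h.charge_subsequence_eq hk, Partition.zeros_empty, subsequence_Iio_zero hi hik,
      charge_Iio_zero]
  · intro h
    obtain ⟨C, hC⟩ := exists_isKCore k P
    obtain rfl := eq_empty_of_charge_subsequence_eq_zero hk hC.2 fun i hi hik ↦
      (hC.charge_subsequence_eq hk i).trans (h i hi hik)
    exact hC

end RimHook

/-- Empty `k`-core criterion: a partition has empty `k`-core if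
and only if the intrinsic median of each subsequence (mod `k`) of its 0/1 sequence
coincides with the median of the whole sequence (which sits at the gap below
position `0`): for each residue `i`, the number of ones of the subsequence before
that gap equals the number of its zeros after it. -/
theorem empty_kCore_iff_subsequence_medians (k : ℕ) (hk : 2 ≤ k) (P : Partition) :
    IsKCore k P Partition.empty ↔
      ∀ i : Fin k,
        {j : ℤ | j < 0 ∧ ¬ isZeroAt P (((i : ℕ) : ℤ) + j * (k : ℤ))}.ncard =
          {j : ℤ | 0 ≤ j ∧ isZeroAt P (((i : ℕ) : ℤ) + j * (k : ℤ))}.ncard  := by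
  rw [isKCore_empty_iff (by omega)]
  constructor
  · intro h i
    exact charge_eq_zero_iff.1 (h i (Int.natCast_nonneg i) (mod_cast i.isLt))
  · intro h i hi hik
    lift i to ℕ using hi
    exact charge_eq_zero_iff.2 (h ⟨i, mod_cast hik⟩)

end RimHookPaper
end

section
/- Let k ≥ 2, and let λ and μ be partitions with core_k(λ) = ∅ and |λ| = k|μ|; write quot_k(λ) = (λ_1,…,λ_k). Let P_μ^λ be the set of k-tuples (μ_1,…,μ_k) of partitions with |μ_i| = |λ_i| for all i and μ_1 ⊕ … ⊕ μ_k = μ. Then the map ω_{kμ}^λ : RHT_{kμ}^λ → ⋃_{(μ_1,…,μ_k)∈P_μ^λ} RHT_{μ_1}^{λ_1} × … × RHT_{μ_k}^{λ_k} is surjective, and every k-tuple (T_1,…,T_k) in its range has exactly z_μ/(z_{μ_1}···z_{μ_k}) preimages, where (μ_1,…,μ_k) are the types of (T_1,…,T_k). -/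
open scoped BigOperators

namespace RimHookPaper

/-!
On the 0/1 sequence, removing a rim hook of length `t` moves one zero `t` places to the left, onto
a one. A move by `k * t` stays within one residue class modulo `k`, hence is a move by `t` in one
member of the quotient. So `T` amounts to a chain of quotients of which only the member labelled
`a j` changes at step `j`, and it can be rebuilt from the `Ti` and the labelling `a` by
interleaving. Given the `Ti`, the admissible labellings are those for which the multiset of the
parts labelled `i` is `ν i`. Their number is computed by induction on the number of parts: putting
a part `x` back multiplies `z` by `x * (m_x + 1)`, with `m_x` the number of parts `x` present.
-/

section YoungDiagrams

variable {A B : Partition} {N t : ℕ}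

theorem Partition.ext_parts (h : ∀ n, A.parts n = B.parts n) : A = B := by
  cases A
  cases B
  congr
  exact funext h

theorem Partition.mem_skew_s3 {c : ℕ × ℕ} :
    c ∈ A.skew B ↔ B.parts c.1 ≤ c.2 ∧ c.2 < A.parts c.1 := by
  simp [Partition.skew, Partition.cells, and_comm]

theorem Partition.size_eq_sum_range (hN : ∀ n, N ≤ n → A.parts n = 0) :
    A.size = ∑ n ∈ Finset.range N, A.parts n :=
  finsum_eq_sum_of_support_subset _ fun n hn => by
    contrapose! hn
    simpa using hN n (by simpa using hn)

theorem Partition.cells_eq_coe_finset (hN : ∀ n, N ≤ n → A.parts n = 0) :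
    A.cells = ↑(((Finset.range N).sigma fun n => Finset.range (A.parts n)).map
      (Equiv.sigmaEquivProd ℕ ℕ).toEmbedding) := by
  ext ⟨n, c⟩
  have hn : c < A.parts n → n < N := fun hc => by
    by_contra! h
    simp [hN n h] at hc
  simpa [Partition.cells] using hn

theorem Partition.finite_cells (A : Partition) : A.cells.Finite := by
  obtain ⟨N, hN⟩ := A.eventually_zero
  rw [Partition.cells_eq_coe_finset hN]
  exact Finset.finite_toSet _

theorem Partition.ncard_cells (A : Partition) : A.cells.ncard = A.size := by
  obtain ⟨N, hN⟩ := A.eventually_zero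
  rw [Partition.cells_eq_coe_finset hN, Set.ncard_coe_finset, Finset.card_map,
    Finset.card_sigma, Partition.size_eq_sum_range hN]
  simp only [Finset.card_range]

theorem Partition.size_eq_add_ncard_skew (h : B ≤ A) :
    A.size = B.size + (A.skew B).ncard := by
  have hsub : B.cells ⊆ A.cells := fun c hc => lt_of_lt_of_le hc (h c.1)
  rw [← A.ncard_cells, ← B.ncard_cells, add_comm, Partition.skew,
    Set.ncard_sdiff_add_ncard_of_subset hsub A.finite_cells]

theorem Partition.size_empty : Partition.empty.size = 0 := finsum_zero

theorem IsRimHook.size (h : IsRimHook A B t) : A.size = B.size + t :=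
  h.2.2.2.2 ▸ Partition.size_eq_add_ncard_skew h.1

theorem IsStep.size (h : IsStep A B t) : A.size = B.size + t := by
  rcases h with ⟨rfl, rfl⟩ | ⟨-, h⟩
  · rfl
  · exact h.size

theorem IsStep.ne (h : IsStep A B t) (ht : 0 < t) : A ≠ B := by
  rintro rfl
  have := h.size
  omega

theorem RHT.size_chain {ν : List ℕ} (T : RHT A ν) (j : Fin (ν.length + 1)) :
    (T.chain j).size = (ν.take j).sum := by
  induction j using Fin.induction with
  | zero => simp [T.chain_zero, Partition.size_empty]
  | succ j ih => simp [(T.step j).size, ih, List.sum_take_succ]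

theorem RHT.sum_eq_size {ν : List ℕ} (T : RHT A ν) : ν.sum = A.size := by
  simpa [T.chain_last] using (T.size_chain (Fin.last _)).symm

theorem RHT.ext_chain {ν : List ℕ} {S T : RHT A ν} (h : ∀ j, S.chain j = T.chain j) : S = T := by
  cases S
  cases T
  congr
  exact funext h

theorem noSquare_skew_iff : NoSquare (A.skew B) ↔ ∀ n, A.parts (n + 1) ≤ B.parts n + 1 := by
  constructor
  · intro h n
    by_contra! hn
    have hA := A.antitone n.le_succ
    have hB := B.antitone n.le_succ
    simp only [Nat.succ_eq_add_one] at hA hB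
    refine h ⟨n, B.parts n, ?_, ?_, ?_, ?_⟩ <;> simp only [Partition.mem_skew_s3] <;> omega
  · rintro h ⟨n, c, hc, -, -, hc'⟩
    simp only [Partition.mem_skew_s3] at hc hc'
    have := h n
    omega

theorem exists_mem_mem_succ_of_reflTransGen {S : Set (ℕ × ℕ)} {n : ℕ} {c d : ℕ × ℕ}
    (h : Relation.ReflTransGen (fun x y => x ∈ S ∧ y ∈ S ∧ Adj x y) c d)
    (hc : c.1 ≤ n) (hd : n < d.1) : ∃ j, (n, j) ∈ S ∧ (n + 1, j) ∈ S := by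
  induction h with
  | refl => omega
  | @tail x y _ hxy ih =>
    by_cases hx : n < x.1
    · exact ih hx
    · obtain ⟨⟨x₁, x₂⟩, y₁, y₂⟩ := x, y
      obtain ⟨hxS, hyS, hadj⟩ := hxy
      simp only [Adj] at hadj hx hd
      obtain ⟨rfl, rfl, rfl⟩ : x₁ = n ∧ y₁ = n + 1 ∧ x₂ = y₂ := by omega
      exact ⟨x₂, hxS, hyS⟩

theorem parts_lt_parts_succ_of_isConnectedSet_skew (h : IsConnectedSet (A.skew B)) {m m' n : ℕ}
    (hm : B.parts m < A.parts m) (hm' : B.parts m' < A.parts m') (hmn : m ≤ n) (hnm' : n < m') :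
    B.parts n < A.parts (n + 1) := by
  obtain ⟨j, hj, hj'⟩ := exists_mem_mem_succ_of_reflTransGen
    (h (m, B.parts m) (Partition.mem_skew_s3.2 ⟨le_rfl, hm⟩)
      (m', B.parts m') (Partition.mem_skew_s3.2 ⟨le_rfl, hm'⟩)) hmn hnm'
  exact (Partition.mem_skew_s3.1 hj).1.trans_lt (Partition.mem_skew_s3.1 hj').2

theorem reflTransGen_adj_symm {S : Set (ℕ × ℕ)} {c d : ℕ × ℕ}
    (h : Relation.ReflTransGen (fun x y => x ∈ S ∧ y ∈ S ∧ Adj x y) c d) :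
    Relation.ReflTransGen (fun x y => x ∈ S ∧ y ∈ S ∧ Adj x y) d c :=
  (Relation.ReflTransGen.mono (fun x y ⟨hy, hx, hadj⟩ => ⟨hx, hy, by
    simp only [Adj] at hadj ⊢; omega⟩) _ _ (Relation.reflTransGen_swap.2 h))

theorem reflTransGen_adj_skew_of_row_eq {n c d : ℕ} (hc : (n, c) ∈ A.skew B)
    (hd : (n, d) ∈ A.skew B) :
    Relation.ReflTransGen (fun x y => x ∈ A.skew B ∧ y ∈ A.skew B ∧ Adj x y) (n, c) (n, d) := by
  wlog hcd : c ≤ d generalizing c d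
  · exact reflTransGen_adj_symm (this hd hc (le_of_not_ge hcd))
  induction d, hcd using Nat.le_induction with
  | base => exact .refl
  | succ d hcd ih =>
    have hd' : (n, d) ∈ A.skew B := by
      simp only [Partition.mem_skew_s3] at hc hd ⊢
      omega
    exact (ih hd').tail ⟨hd', hd, Or.inl ⟨rfl, Or.inl rfl⟩⟩

theorem isConnectedSet_skew {m m' : ℕ} (hrow : ∀ c ∈ A.skew B, m ≤ c.1 ∧ c.1 ≤ m')
    (hoverlap : ∀ n, m ≤ n → n < m' → B.parts n < A.parts (n + 1)) :
    IsConnectedSet (A.skew B) := by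
  rintro ⟨n, c⟩ hc ⟨n', d⟩ hd
  wlog hnn' : n ≤ n' generalizing n c n' d
  · exact reflTransGen_adj_symm (this _ _ hd _ _ hc (le_of_not_ge hnn'))
  induction n', hnn' using Nat.le_induction generalizing d with
  | base => exact reflTransGen_adj_skew_of_row_eq hc hd
  | succ l hl ih =>
    have hlm : m ≤ l := (hrow _ hc).1.trans hl
    have hlm' : l < m' := (hrow _ hd).2
    have hup : (l, B.parts l) ∈ A.skew B := Partition.mem_skew_s3.2
      ⟨le_rfl, (hoverlap l hlm hlm').trans_le (A.antitone l.le_succ)⟩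
    have hdown : (l + 1, B.parts l) ∈ A.skew B := Partition.mem_skew_s3.2
      ⟨B.antitone l.le_succ, hoverlap l hlm hlm'⟩
    exact ((ih _ hup).tail ⟨hup, hdown, Or.inr ⟨rfl, Or.inl rfl⟩⟩).trans
      (reflTransGen_adj_skew_of_row_eq hdown hd)

end YoungDiagrams

section Zeros

variable {P Q : Partition} {N : ℕ}

/-- The positions of the zeros of the 0/1 sequence `s(P)`. -/
def zeros (P : Partition) : Set ℤ := Set.range (zpos P)

theorem zpos_strictAnti (P : Partition) : StrictAnti (zpos P) := fun a b h => by
  have := P.antitone h.le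
  simp only [zpos]
  omega

theorem zpos_eq_zpos_iff {n l : ℕ} : zpos P n = zpos P l ↔ n = l :=
  (zpos_strictAnti P).injective.eq_iff

theorem eq_of_strictAnti_of_range_eq {f g : ℕ → ℤ} (hf : StrictAnti f) (hg : StrictAnti g)
    (h : Set.range f = Set.range g) : f = g := by
  have hneg : -f = -g := (StrictMono.range_inj hf.neg hg.neg).1 (by
    rw [← Set.neg_range, ← Set.neg_range, h])
  exact neg_injective hneg

theorem eq_of_zeros_eq_preimage_add {d : ℤ} (h : zeros P = (· + d) ⁻¹' zeros Q) :
    d = 0 ∧ P = Q := by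
  have hz : (fun n => zpos P n + d) = zpos Q := by
    refine eq_of_strictAnti_of_range_eq
      (fun a b hab => add_lt_add_left (zpos_strictAnti P hab) d) (zpos_strictAnti Q) ?_
    change Set.range ((· + d) ∘ zpos P) = zeros Q
    rw [Set.range_comp]
    change (· + d) '' zeros P = zeros Q
    rw [h, Set.image_preimage_eq _ (add_right_surjective d)]
  have hparts : ∀ n, (P.parts n : ℤ) + d = Q.parts n := fun n => by
    have := congrFun hz n
    simp only [zpos] at this
    linarith
  obtain ⟨N, hN⟩ := P.eventually_zero
  obtain ⟨M, hM⟩ := Q.eventually_zero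
  obtain rfl : d = 0 := by
    simpa [hN _ (N.le_add_right M), hM _ (M.le_add_left N)] using hparts (N + M)
  exact ⟨rfl, Partition.ext_parts fun n => by simpa using hparts n⟩

theorem zeros_injective : Function.Injective zeros := fun P Q h =>
  (eq_of_zeros_eq_preimage_add (d := 0) (by simpa using h)).2

theorem exists_zpos_eq {z : ℕ → ℤ} (hz : StrictAnti z) (hN : ∀ n, N ≤ n → z n = -n - 1) :
    ∃ P, zpos P = z := by
  have hanti : Antitone fun n => z n + n + 1 := antitone_nat_of_succ_le fun n => by
    have := hz (Nat.lt_add_one n)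
    push_cast
    omega
  have hnonneg : ∀ n, 0 ≤ z n + n + 1 := fun n => by
    have h := hanti (le_max_left n N)
    have h' := hN _ (le_max_right n N)
    simp only at h
    omega
  refine ⟨⟨fun n => (z n + n + 1).toNat, fun i j hij => Int.toNat_le_toNat (hanti hij),
    ⟨N, fun n hn => by rw [hN n hn]; omega⟩⟩, funext fun n => ?_⟩
  have := hnonneg n
  simp only [zpos]
  omega

theorem sum_zpos (hN : ∀ n, N ≤ n → P.parts n = 0) :
    ∑ n ∈ Finset.range N, zpos P n = P.size + ∑ n ∈ Finset.range N, (-(n : ℤ) - 1) := by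
  rw [Partition.size_eq_sum_range hN, Nat.cast_sum, ← Finset.sum_add_distrib]
  exact Finset.sum_congr rfl fun n _ => by simp only [zpos]; ring

end Zeros

section Moves

variable {α ι : Type*}

/-- `S` arises from `R` by moving one element from `x` to the position `y`, which must be free
once `x` has been taken away; the trivial move `x = y` is allowed. -/
def IsMove (S R : Set α) (x y : α) : Prop :=
  x ∈ R ∧ y ∉ R \ {x} ∧ S = insert y (R \ {x})

theorem isMove_self_iff {S R : Set α} {x : α} : IsMove S R x x ↔ x ∈ R ∧ S = R := by
  simp only [IsMove, Set.insert_sdiff_singleton, Set.mem_sdiff, Set.mem_singleton_iff,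
    not_true_eq_false, and_false, not_false_eq_true, true_and]
  exact and_congr_right fun hx => by rw [Set.insert_eq_of_mem hx]

theorem isMove_range {f g : ι → α} {σ : ι → ι} (hf : Function.Injective f)
    (hg : Function.Injective g) (hσ : Function.Bijective σ) {a : ι}
    (h : ∀ n, n ≠ a → f n = g (σ n)) :
    IsMove (Set.range f) (Set.range g) (g (σ a)) (f a) := by
  have hrest : Set.range g \ {g (σ a)} = f '' {a}ᶜ := by
    rw [Set.image_congr (s := {a}ᶜ) h, ← Function.comp_def, Set.image_comp, Set.image_compl_eq hσ,
      Set.image_singleton, Set.image_compl_eq_range_sdiff_image hg, Set.image_singleton]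
  refine ⟨⟨_, rfl⟩, ?_, ?_⟩
  · rw [hrest, hf.mem_set_image]
    exact fun ha => ha rfl
  · rw [hrest, ← Set.image_insert_eq, Set.insert_eq, Set.union_compl_self, Set.image_univ]

end Moves

section ZeroShifts

variable {A B : Partition} {m m' t : ℕ}

theorem cycleFun_bijective (h : m ≤ m') : Function.Bijective (cycleFun m m') := by
  constructor
  · intro a b hab
    simp only [cycleFun] at hab
    split_ifs at hab <;> omega
  · intro b
    by_cases hb : m ≤ b ∧ b ≤ m'
    · rcases hb.2.eq_or_lt with rfl | hlt
      · exact ⟨m, if_pos rfl⟩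
      · exact ⟨b + 1, by simp only [cycleFun]; split_ifs <;> omega⟩
    · exact ⟨b, by simp only [cycleFun]; split_ifs <;> omega⟩

theorem cycleFun_self : cycleFun m m' m = m' := if_pos rfl

/-- `s(A)` arises from `s(B)` by moving the zero of row `m'` forward by `t` places to become the
zero of row `m`, the zeros of rows `m, …, m' - 1` each moving down one row. -/
structure IsZeroShift (A B : Partition) (m m' t : ℕ) : Prop where
  le : m ≤ m'
  zpos_top : zpos A m = zpos B m' + t
  zpos_of_ne : ∀ n, n ≠ m → zpos A n = zpos B (cycleFun m m' n)

namespace IsZeroShift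

theorem isMove (h : IsZeroShift A B m m' t) :
    IsMove (zeros A) (zeros B) (zpos B m') (zpos B m' + t) := by
  have hmove := isMove_range (zpos_strictAnti A).injective (zpos_strictAnti B).injective
    (cycleFun_bijective h.le) h.zpos_of_ne
  rwa [cycleFun_self, h.zpos_top] at hmove

theorem parts_eq (h : IsZeroShift A B m m' t) {n : ℕ} (hn : n < m ∨ m' < n) :
    A.parts n = B.parts n := by
  have hle := h.le
  have hz := h.zpos_of_ne n (by omega)
  rw [cycleFun, if_neg (by omega), if_neg (by omega)] at hz
  simpa [zpos] using hz

theorem parts_succ (h : IsZeroShift A B m m' t) {n : ℕ} (hmn : m ≤ n) (hnm' : n < m') :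
    A.parts (n + 1) = B.parts n + 1 := by
  have hz := h.zpos_of_ne (n + 1) (by omega)
  rw [cycleFun, if_neg (by omega), if_pos (by omega), Nat.add_sub_cancel] at hz
  simp only [zpos, Nat.cast_add, Nat.cast_one] at hz
  omega

theorem parts_lt (h : IsZeroShift A B m m' t) (ht : 0 < t) {n : ℕ} (hmn : m ≤ n)
    (hnm' : n ≤ m') : B.parts n < A.parts n := by
  rcases hnm'.eq_or_lt with rfl | hlt
  · rcases hmn.eq_or_lt with rfl | hmn
    · have := h.zpos_top
      simp only [zpos] at this
      omega
    · obtain ⟨n, rfl⟩ := Nat.exists_eq_add_one_of_ne_zero (Nat.ne_zero_of_lt hmn)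
      have := h.parts_succ (Nat.le_of_lt_succ hmn) n.lt_succ_self
      have := B.antitone n.le_succ
      simp only [Nat.succ_eq_add_one] at this
      omega
  · have := h.parts_succ hmn hlt
    have := A.antitone n.le_succ
    simp only [Nat.succ_eq_add_one] at this
    omega

theorem size (h : IsZeroShift A B m m' t) : A.size = B.size + t := by
  obtain ⟨M, hM⟩ := B.eventually_zero
  obtain ⟨N, hMN, hN⟩ : ∃ N, M ≤ N ∧ m' < N :=
    ⟨_, le_max_left M (m' + 1), le_max_right M (m' + 1)⟩
  have hB : ∀ n, N ≤ n → B.parts n = 0 := fun n hn => hM n (hMN.trans hn)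
  have hA : ∀ n, N ≤ n → A.parts n = 0 := fun n hn =>
    (h.parts_eq (Or.inr (hN.trans_le hn))).trans (hB n hn)
  have hle := h.le
  have hperm : ∑ n ∈ Finset.range N, zpos B (cycleFun m m' n) =
      ∑ n ∈ Finset.range N, zpos B n :=
    Finset.sum_bijective _ (cycleFun_bijective h.le)
      (fun n => by simp only [Finset.mem_range, cycleFun]; split_ifs <;> omega) fun _ _ => rfl
  have hdiff : ∑ n ∈ Finset.range N, (zpos A n - zpos B (cycleFun m m' n)) = t := by
    rw [Finset.sum_eq_single_of_mem m (Finset.mem_range.2 (hle.trans_lt hN)) fun n _ hn =>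
      sub_eq_zero.2 (h.zpos_of_ne n hn), cycleFun_self, h.zpos_top, add_sub_cancel_left]
  rw [Finset.sum_sub_distrib, hperm, sum_zpos hA, sum_zpos hB] at hdiff
  omega

theorem isRimHook (h : IsZeroShift A B m m' t) (ht : 0 < t) : IsRimHook A B t := by
  have hle : B ≤ A := fun n => by
    by_cases hn : n < m ∨ m' < n
    · exact (h.parts_eq hn).ge
    · exact (h.parts_lt ht (by omega) (by omega)).le
  have hcard := Partition.size_eq_add_ncard_skew hle
  rw [h.size, Nat.add_left_cancel_iff] at hcard
  refine ⟨hle, Set.nonempty_of_ncard_ne_zero (by omega), ?_, noSquare_skew_iff.2 fun n => ?_,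
    hcard.symm⟩
  · refine isConnectedSet_skew (m := m) (m' := m') (fun c hc => ?_) fun n hmn hnm' => ?_
    · by_contra! hrow
      have := h.parts_eq (n := c.1) (by omega)
      have := Partition.mem_skew_s3.1 hc
      omega
    · exact (h.parts_succ hmn hnm').symm ▸ Nat.lt_succ_self _
  · by_cases hn : m ≤ n ∧ n < m'
    · exact (h.parts_succ hn.1 hn.2).le
    · have hn' : A.parts (n + 1) ≤ B.parts n := by
        rcases not_and_or.1 hn with hn | hn
        · exact (A.antitone n.le_succ).trans (h.parts_eq (Or.inl (not_le.1 hn))).le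
        · exact (h.parts_eq (Or.inr (by omega))).trans_le (B.antitone n.le_succ)
      exact hn'.trans (Nat.le_succ _)

end IsZeroShift

theorem IsRimHook.exists_rows (h : IsRimHook A B t) :
    ∃ m m', m ≤ m' ∧ (∀ n, n < m ∨ m' < n → A.parts n = B.parts n) ∧
      ∀ n, m ≤ n → n < m' → A.parts (n + 1) = B.parts n + 1 := by
  obtain ⟨hle, ⟨c, hc⟩, hconn, hsq, -⟩ := h
  rw [noSquare_skew_iff] at hsq
  obtain ⟨N, hN⟩ := A.eventually_zero
  let rows : Set ℕ := {n | B.parts n < A.parts n}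
  have hne : rows.Nonempty :=
    ⟨c.1, (Partition.mem_skew_s3.1 hc).1.trans_lt (Partition.mem_skew_s3.1 hc).2⟩
  have hbdd : BddAbove rows := ⟨N, fun n hn => by
    by_contra! hlt
    simp [rows, hN n hlt.le] at hn⟩
  have hm : sInf rows ∈ rows := Nat.sInf_mem hne
  have hm' : sSup rows ∈ rows := Nat.sSup_mem hne hbdd
  refine ⟨sInf rows, sSup rows, le_csSup hbdd hm, fun n hn => ?_, fun n hmn hnm' => ?_⟩
  · refine (hle n).antisymm' (not_lt.1 fun hlt => ?_)
    rcases hn with hn | hn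
    · exact Nat.notMem_of_lt_sInf hn hlt
    · exact hn.not_ge (le_csSup hbdd hlt)
  · exact (hsq n).antisymm
      (parts_lt_parts_succ_of_isConnectedSet_skew hconn hm hm' hmn hnm')

theorem IsRimHook.exists_isZeroShift (h : IsRimHook A B t) :
    ∃ m m', IsZeroShift A B m m' t := by
  obtain ⟨m, m', hmm', houter, hinner⟩ := h.exists_rows
  have htop : zpos B m' ≤ zpos A m := by
    have := h.1 m
    have := B.antitone hmm'
    simp only [zpos]
    omega
  have hshift : IsZeroShift A B m m' (zpos A m - zpos B m').toNat := by
    refine ⟨hmm', by omega, fun n hn => ?_⟩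
    rw [cycleFun, if_neg hn]
    split_ifs with hmid
    · obtain ⟨n, rfl⟩ := Nat.exists_eq_add_one_of_ne_zero (Nat.ne_zero_of_lt hmid.1)
      simp [zpos, hinner n (Nat.le_of_lt_succ hmid.1) hmid.2]
    · simp [zpos, houter n (by omega)]
  have ht : (zpos A m - zpos B m').toNat = t := by
    have := hshift.size
    have := h.size
    omega
  exact ⟨m, m', ht ▸ hshift⟩

theorem exists_isZeroShift {y : ℤ} (hy : y ∈ zeros B) (hyt : y + t ∉ zeros B \ {y}) :
    ∃ A m m', IsZeroShift A B m m' t ∧ zpos B m' = y := by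
  classical
  obtain ⟨m', rfl⟩ := hy
  have hex : ∃ n, zpos B n ≤ zpos B m' + t := ⟨m', by omega⟩
  obtain ⟨m, hmdef⟩ : ∃ m, m = Nat.find hex := ⟨_, rfl⟩
  have hm : zpos B m ≤ zpos B m' + t := hmdef ▸ Nat.find_spec hex
  have hmin : ∀ n, n < m → zpos B m' + t < zpos B n := fun n hn =>
    not_le.1 (Nat.find_min hex (hmdef ▸ hn))
  have hmm' : m ≤ m' := hmdef ▸ Nat.find_min' hex (by omega)
  have hfree : m ≠ m' → zpos B m < zpos B m' + t := fun hne => hm.lt_of_ne fun heq =>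
    hyt ⟨⟨m, heq⟩, fun hself => hne (zpos_eq_zpos_iff.1 (heq.trans hself))⟩
  let z : ℕ → ℤ := fun n => if n = m then zpos B m' + t else zpos B (cycleFun m m' n)
  have hz : StrictAnti z := strictAnti_nat_of_succ_lt fun n => by
    rcases eq_or_ne n m with rfl | hn
    · simp only [z, if_true, n.succ_ne_self, if_false, cycleFun]
      split_ifs with h
      · exact hfree (by omega)
      · have := zpos_strictAnti B (show m' < n + 1 by omega)
        omega
    rcases eq_or_ne (n + 1) m with rfl | hn'
    · simpa [z, cycleFun] using hmin n n.lt_succ_self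
    · simp only [z, hn, hn', if_false]
      exact zpos_strictAnti B (by simp only [cycleFun]; split_ifs <;> omega)
  obtain ⟨N, hN⟩ := B.eventually_zero
  obtain ⟨A, hA⟩ := exists_zpos_eq (N := max N (m' + 1)) hz fun n hn => by
    rw [max_le_iff] at hn
    simp [z, cycleFun, zpos, hN n hn.1, show n ≠ m by omega, show ¬ n ≤ m' by omega]
  exact ⟨A, m, m', ⟨hmm', by simp [hA, z], fun n hn => by simp [hA, z, hn]⟩, rfl⟩

theorem exists_isMove {y : ℤ} (hy : y ∈ zeros B) (hyt : y + t ∉ zeros B \ {y}) :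
    ∃ A, IsMove (zeros A) (zeros B) y (y + t) := by
  obtain ⟨A, m, m', h, rfl⟩ := exists_isZeroShift hy hyt
  exact ⟨A, h.isMove⟩

theorem isStep_iff_exists_isMove :
    IsStep A B t ↔ ∃ y, IsMove (zeros A) (zeros B) y (y + t) := by
  constructor
  · rintro (⟨rfl, rfl⟩ | ⟨-, h⟩)
    · exact ⟨zpos A 0, by
        rw [Nat.cast_zero, add_zero, isMove_self_iff]
        exact ⟨Set.mem_range_self 0, rfl⟩⟩
    · obtain ⟨m, m', h⟩ := h.exists_isZeroShift
      exact ⟨_, h.isMove⟩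
  · rintro ⟨y, hmove⟩
    rcases t.eq_zero_or_pos with rfl | ht
    · rw [Nat.cast_zero, add_zero, isMove_self_iff] at hmove
      exact Or.inl ⟨rfl, zeros_injective hmove.2⟩
    · obtain ⟨A', m, m', h, rfl⟩ := exists_isZeroShift hmove.1 hmove.2.1
      obtain rfl : A = A' := zeros_injective (hmove.2.2.trans h.isMove.2.2.symm)
      exact Or.inr ⟨ht, h.isRimHook ht⟩

end ZeroShifts

section Digits

variable {α β ι : Type*} {k : ℕ}

theorem isMove_iff_preimage {f : ι → α → β} (hf : Function.Bijective (Function.uncurry f))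
    {S R : Set β} {i : ι} {x y : α} :
    IsMove S R (f i x) (f i y) ↔
      IsMove (f i ⁻¹' S) (f i ⁻¹' R) x y ∧ ∀ i', i' ≠ i → f i' ⁻¹' S = f i' ⁻¹' R := by
  have hinj : ∀ {i' j j'}, f i' j = f i j' ↔ i' = i ∧ j = j' := fun {i' j j'} =>
    (hf.1.eq_iff (a := (i', j)) (b := (i, j'))).trans Prod.mk_inj
  have hset : S = insert (f i y) (R \ {f i x}) ↔
      ∀ i' j, f i' j ∈ S ↔ f i' j ∈ insert (f i y) (R \ {f i x}) := by
    rw [Set.ext_iff, hf.2.forall, Prod.forall]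
    rfl
  have hself : f i ⁻¹' S = insert y (f i ⁻¹' R \ {x}) ↔
      ∀ j, f i j ∈ S ↔ f i j ∈ insert (f i y) (R \ {f i x}) := by
    simp [Set.ext_iff, hinj]
  have hother : ∀ i', i' ≠ i → (f i' ⁻¹' S = f i' ⁻¹' R ↔
      ∀ j, f i' j ∈ S ↔ f i' j ∈ insert (f i y) (R \ {f i x})) := fun i' hi' => by
    simp [Set.ext_iff, hinj, hi']
  have hfree : f i y ∉ R \ {f i x} ↔ y ∉ f i ⁻¹' R \ {x} := by
    simp [hinj]
  simp only [IsMove, hset, hself, hfree, Set.mem_preimage]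
  constructor
  · rintro ⟨hx, hy, h⟩
    exact ⟨⟨hx, hy, h i⟩, fun i' hi' => (hother i' hi').2 (h i')⟩
  · rintro ⟨⟨hx, hy, h⟩, h'⟩
    refine ⟨hx, hy, fun i' => ?_⟩
    obtain rfl | hi' := eq_or_ne i' i
    · exact h
    · exact (hother i' hi').1 (h' i' hi')

/-- The position in a bi-infinite sequence of the `j`-th digit of its `i`-th subsequence mod `k`. -/
def digitPos (k : ℕ) (i : Fin k) (j : ℤ) : ℤ := (i : ℕ) + j * k

theorem digitPos_add {i : Fin k} {j : ℤ} {t : ℕ} :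
    digitPos k i (j + t) = digitPos k i j + (k * t : ℕ) := by
  simp only [digitPos]
  push_cast
  ring

theorem uncurry_digitPos_bijective [NeZero k] :
    Function.Bijective (Function.uncurry (digitPos k)) := by
  convert ((Equiv.prodComm _ _).trans (Int.divModEquiv k).symm).bijective using 1
  ext ⟨i, j⟩
  simp [digitPos, add_comm]

theorem exists_digitPos_eq [NeZero k] (x : ℤ) : ∃ i j, digitPos k i j = x := by
  obtain ⟨⟨i, j⟩, h⟩ := (uncurry_digitPos_bijective (k := k)).2 x
  exact ⟨i, j, h⟩

end Digits

section Quotients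

variable {k t : ℕ} {A B P : Partition} {Q Q' QA QB : Fin k → Partition}

/-- `Q` is the `k`-quotient of `P` and the medians of its members agree with the median of `s(P)`,
so that no shift is needed in `IsKQuotient`; this is the case exactly when `P` has empty
`k`-core. -/
def IsAlignedQuotient (k : ℕ) (P : Partition) (Q : Fin k → Partition) : Prop :=
  ∀ i, zeros (Q i) = digitPos k i ⁻¹' zeros P

namespace IsAlignedQuotient

theorem isKQuotient (h : IsAlignedQuotient k P Q) : IsKQuotient k P Q := fun i =>
  ⟨0, fun j => by rw [add_zero]; exact Set.ext_iff.1 (h i) j⟩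

theorem eq_of_isKQuotient (h : IsAlignedQuotient k P Q) (h' : IsKQuotient k P Q') : Q = Q' := by
  funext i
  obtain ⟨d, hd⟩ := h' i
  refine ((eq_of_zeros_eq_preimage_add (d := d) ?_).2).symm
  rw [h i]
  exact Set.ext hd

theorem eq (h : IsAlignedQuotient k P Q) (h' : IsAlignedQuotient k P Q') : Q = Q' :=
  h.eq_of_isKQuotient h'.isKQuotient

variable [NeZero k]

theorem eq_left (hA : IsAlignedQuotient k A Q) (hB : IsAlignedQuotient k B Q) : A = B := by
  refine zeros_injective (Set.ext fun x => ?_)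
  obtain ⟨i, j, rfl⟩ := exists_digitPos_eq (k := k) x
  exact Set.ext_iff.1 ((hA i).symm.trans (hB i)) j

theorem isMove_iff (hA : IsAlignedQuotient k A QA) (hB : IsAlignedQuotient k B QB) {i : Fin k}
    {y : ℤ} :
    IsMove (zeros A) (zeros B) (digitPos k i y) (digitPos k i y + (k * t : ℕ)) ↔
      IsMove (zeros (QA i)) (zeros (QB i)) y (y + t) ∧ ∀ i', i' ≠ i → QA i' = QB i' := by
  simp only [← digitPos_add, isMove_iff_preimage uncurry_digitPos_bijective, ← hA _, ← hB _,
    zeros_injective.eq_iff]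

theorem isStep_iff (hA : IsAlignedQuotient k A QA) (hB : IsAlignedQuotient k B QB) :
    IsStep A B (k * t) ↔ ∃ i, (∀ i', i' ≠ i → QA i' = QB i') ∧ IsStep (QA i) (QB i) t := by
  simp only [isStep_iff_exists_isMove]
  constructor
  · rintro ⟨y, h⟩
    obtain ⟨i, j, rfl⟩ := exists_digitPos_eq (k := k) y
    exact ⟨i, ((isMove_iff hA hB).1 h).2, j, ((isMove_iff hA hB).1 h).1⟩
  · rintro ⟨i, h, j, hmove⟩
    exact ⟨_, (isMove_iff hA hB).2 ⟨hmove, h⟩⟩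

theorem exists_of_isStep (hB : IsAlignedQuotient k B QB) (h : IsStep A B (k * t)) :
    ∃ QA, IsAlignedQuotient k A QA := by
  obtain ⟨y, h⟩ := isStep_iff_exists_isMove.1 h
  obtain ⟨i, j, rfl⟩ := exists_digitPos_eq (k := k) y
  rw [← digitPos_add, isMove_iff_preimage uncurry_digitPos_bijective, ← hB] at h
  obtain ⟨C, hC⟩ := exists_isMove h.1.1 h.1.2.1
  refine ⟨Function.update QB i C, fun i' => ?_⟩
  obtain rfl | hi' := eq_or_ne i' i
  · rw [Function.update_self, hC.2.2, h.1.2.2]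
  · rw [Function.update_of_ne hi', h.2 i' hi', hB]

theorem exists_of_isStep_quotient (hB : IsAlignedQuotient k B QB) {i : Fin k}
    (hne : ∀ i', i' ≠ i → QA i' = QB i') (h : IsStep (QA i) (QB i) t) :
    ∃ A, IsAlignedQuotient k A QA := by
  obtain ⟨y, hmove⟩ := isStep_iff_exists_isMove.1 h
  obtain ⟨A, hA⟩ := exists_isMove (B := B) (y := digitPos k i y) (t := k * t)
    ((hB i).subset hmove.1) (by
      rw [← digitPos_add]
      exact fun h => hmove.2.1 ⟨(hB i).symm.subset h.1, fun hy => h.2 (congrArg _ hy)⟩)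
  rw [← digitPos_add, isMove_iff_preimage uncurry_digitPos_bijective, ← hB] at hA
  refine ⟨A, fun i' => ?_⟩
  obtain rfl | hi' := eq_or_ne i' i
  · rw [hA.1.2.2, hmove.2.2]
  · rw [hA.2 i' hi', hne i' hi', hB]

end IsAlignedQuotient

theorem zeros_empty : zeros Partition.empty = Set.Iio 0 := by
  ext x
  constructor
  · rintro ⟨n, rfl⟩
    simp only [zpos, Partition.empty, Set.mem_Iio]
    omega
  · intro hx
    refine ⟨(-x - 1).toNat, ?_⟩
    simp only [zpos, Partition.empty, Set.mem_Iio] at hx ⊢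
    omega

theorem isAlignedQuotient_empty :
    IsAlignedQuotient k Partition.empty fun _ => Partition.empty := fun i => by
  ext j
  simp only [zeros_empty, Set.mem_preimage, Set.mem_Iio, digitPos]
  have hi : ((i : ℕ) : ℤ) < k := by exact_mod_cast i.isLt
  constructor <;> intro h <;> nlinarith

theorem exists_isAlignedQuotient_of_reflTransGen [NeZero k]
    (h : Relation.ReflTransGen (fun A B => IsRimHook A B k) P Partition.empty) :
    ∃ Q, IsAlignedQuotient k P Q := by
  induction h using Relation.ReflTransGen.head_induction_on with
  | refl => exact ⟨_, isAlignedQuotient_empty⟩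
  | head h _ ih =>
    obtain ⟨Q, hQ⟩ := ih
    exact hQ.exists_of_isStep (t := 1) (Or.inr ⟨by simp [NeZero.pos], by simpa using h⟩)

theorem IsKQuotient.isAlignedQuotient [NeZero k] (hQ : IsKQuotient k P Q)
    (hcore : IsKCore k P Partition.empty) : IsAlignedQuotient k P Q := by
  obtain ⟨Q', hQ'⟩ := exists_isAlignedQuotient_of_reflTransGen hcore.1
  rwa [← hQ'.eq_of_isKQuotient hQ]

end Quotients

section FiberEnumerations

variable {α ι : Type*} {n l : ℕ} {a : Fin n → ι} {i : ι} {e e' : Fin l → Fin n}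

/-- `e` lists the positions carrying the label `i` in increasing order. -/
structure IsFiberEnum (a : Fin n → ι) (i : ι) (e : Fin l → Fin n) : Prop where
  strictMono : StrictMono e
  mem_range : ∀ {j}, j ∈ Set.range e ↔ a j = i

theorem IsFiberEnum.label_apply (he : IsFiberEnum a i e) (s : Fin l) : a (e s) = i :=
  he.mem_range.1 ⟨s, rfl⟩

theorem IsFiberEnum.eq (he : IsFiberEnum a i e) (he' : IsFiberEnum a i e') : e = e' :=
  (StrictMono.range_inj he.strictMono he'.strictMono).1
    (Set.ext fun _ => he.mem_range.trans he'.mem_range.symm)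

/-- The number of values of `e` preceding the gap `j`. A chain of which only the steps `e s` are
nontrivial is at its `gapRank e j`-th stage when the full chain is at stage `j`. -/
def gapRank (e : Fin l → Fin n) (j : Fin (n + 1)) : Fin (l + 1) :=
  ⟨(Finset.univ.filter fun s => (e s).castSucc < j).card,
    Nat.lt_succ_of_le ((Finset.card_le_univ _).trans_eq (Fintype.card_fin l))⟩

theorem gapRank_zero : gapRank e 0 = 0 := by
  simp [gapRank]

theorem gapRank_last : gapRank e (Fin.last n) = Fin.last l := by
  simp [gapRank, Fin.ext_iff, Fin.castSucc_lt_last]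

theorem gapRank_castSucc_apply (he : StrictMono e) (s : Fin l) :
    gapRank e (e s).castSucc = s.castSucc := by
  simp [gapRank, Fin.ext_iff, he.lt_iff_lt, Finset.filter_gt_eq_Iio]

theorem gapRank_succ_apply (he : StrictMono e) (s : Fin l) :
    gapRank e (e s).succ = s.succ := by
  simp [gapRank, Fin.ext_iff, Fin.castSucc_lt_succ_iff, he.le_iff_le, Finset.filter_ge_eq_Iic]

theorem gapRank_castSucc_eq_succ {j : Fin n} (hj : j ∉ Set.range e) :
    gapRank e j.castSucc = gapRank e j.succ := by
  have hne : ∀ s, e s ≠ j := fun s hs => hj ⟨s, hs⟩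
  simp only [gapRank, Fin.castSucc_lt_castSucc_iff, Fin.castSucc_lt_succ_iff,
    fun s => (hne s).le_iff_lt]

theorem IsFiberEnum.gapRank_eq_of_ne (he : IsFiberEnum a i e) {j : Fin n} (hj : i ≠ a j) :
    gapRank e j.castSucc = gapRank e j.succ :=
  gapRank_castSucc_eq_succ fun h => hj (he.mem_range.1 h).symm

theorem eq_comp_gapRank (he : StrictMono e) {c : Fin (n + 1) → α} {d : Fin (l + 1) → α}
    (hc : ∀ j, j ∉ Set.range e → c j.castSucc = c j.succ) (hzero : c 0 = d 0)
    (hsucc : ∀ s, c (e s).succ = d s.succ) (j : Fin (n + 1)) : c j = d (gapRank e j) := by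
  induction j using Fin.induction with
  | zero => rw [gapRank_zero, hzero]
  | succ j ih =>
    by_cases hj : j ∈ Set.range e
    · obtain ⟨s, rfl⟩ := hj
      rw [gapRank_succ_apply he, hsucc]
    · rw [← hc j hj, ih, gapRank_castSucc_eq_succ hj]

end FiberEnumerations

section Fibers

variable {ι β : Type*} [DecidableEq ι] {n : ℕ}

/-- The multiset of the values of `m` on each fiber of the labelling `a`. -/
def fibers (m : Fin n → β) (a : Fin n → ι) : ι → Multiset β :=
  ∑ j, Pi.single (a j) {m j}

theorem fibers_succ (m : Fin (n + 1) → β) (a : Fin (n + 1) → ι) :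
    fibers m a = Pi.single (a 0) {m 0} + fibers (Fin.tail m) (Fin.tail a) :=
  Fin.sum_univ_succ _

theorem fibers_apply (m : Fin n → β) (a : Fin n → ι) (i : ι) :
    fibers m a i = (Finset.univ.filter fun j => a j = i).val.map m := by
  simp only [fibers, Finset.sum_apply, Pi.single_apply, eq_comm (a := i)]
  rw [← Finset.sum_filter, ← Multiset.sum_map_singleton (Multiset.map m _), Multiset.map_map]
  rfl

theorem sum_fibers [Fintype ι] (m : Fin n → β) (a : Fin n → ι) :
    ∑ i, fibers m a i = ∑ j, {m j} := by
  simp only [fibers, Finset.sum_apply]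
  rw [Finset.sum_comm]
  exact Finset.sum_congr rfl fun j _ => Fintype.sum_pi_single' (a j) {m j}

theorem fibers_eq_ofFn {m : Fin n → β} {a : Fin n → ι} {i : ι} {l : ℕ} {e : Fin l → Fin n}
    (he : IsFiberEnum a i e) : fibers m a i = (List.ofFn (m ∘ e) : Multiset β) := by
  have himage : (Finset.univ.filter fun j => a j = i) =
      Finset.univ.map ⟨e, he.strictMono.injective⟩ := by
    ext j
    simp [← he.mem_range]
  rw [fibers_apply, himage, Finset.map_val, Multiset.map_map]
  exact Fin.univ_val_map _

theorem exists_isFiberEnum [PartialOrder β] {m : Fin n → β} (hm : Antitone m) {a : Fin n → ι}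
    {i : ι} {ν : List β} (hν : ν.Pairwise (· ≥ ·)) (h : fibers m a i = (ν : Multiset β)) :
    ∃ e : Fin ν.length → Fin n, IsFiberEnum a i e ∧ ∀ s, ν.get s = m (e s) := by
  let S : Finset (Fin n) := Finset.univ.filter fun j => a j = i
  have hcard : S.card = ν.length := by
    rw [← Multiset.coe_card, ← h, fibers_apply, Multiset.card_map]
    rfl
  have he : IsFiberEnum a i (S.orderEmbOfFin hcard) :=
    ⟨OrderEmbedding.strictMono _, by simp [Finset.range_orderEmbOfFin, S]⟩
  have hsorted : (List.ofFn (m ∘ S.orderEmbOfFin hcard)).Pairwise (· ≥ ·) :=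
    List.pairwise_ofFn.2 fun _ _ hlt => hm (he.strictMono hlt).le
  have hofFn : List.ofFn ν.get = List.ofFn (m ∘ S.orderEmbOfFin hcard) := by
    rw [List.ofFn_get]
    exact List.Perm.eq_of_pairwise' hν hsorted
      (Multiset.coe_eq_coe.1 (h.symm.trans (fibers_eq_ofFn he)))
  exact ⟨_, he, congrFun (List.ofFn_injective hofFn)⟩

theorem exists_antitone_get_map {γ : Type*} [Preorder β] (f : β → γ) {l : List β}
    (hl : l.Pairwise (· ≥ ·)) :
    ∃ m : Fin (l.map f).length → β,
      Antitone m ∧ (∀ j, (l.map f).get j = f (m j)) ∧ ∑ j, {m j} = (l : Multiset β) := by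
  have hlen : (l.map f).length = l.length := List.length_map f
  refine ⟨fun j => l.get (j.cast hlen), fun i j hij => hl.sortedGE.antitone_get hij,
    fun j => by simp, ?_⟩
  calc ∑ j : Fin (l.map f).length, {l.get (j.cast hlen)}
      = ∑ s, {l.get s} := Fintype.sum_equiv (finCongr hlen) _ _ fun _ => rfl
    _ = ((List.ofFn l.get).map singleton).sum := by rw [List.map_ofFn, List.sum_ofFn]; rfl
    _ = (l : Multiset β) := by
      rw [List.ofFn_get, ← Multiset.sum_coe, ← Multiset.map_coe, Multiset.sum_map_singleton]

end Fibers

section Counting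

theorem zpart_cons (x : ℕ) (M : Multiset ℕ) :
    zpart (x ::ₘ M) = x * (M.count x + 1) * zpart M := by
  have hx : x ∈ (x ::ₘ M).toFinset := by simp
  have hM : ∏ j ∈ M.toFinset, (M.count j).factorial =
      ∏ j ∈ (x ::ₘ M).toFinset, (M.count j).factorial :=
    Finset.prod_subset (Multiset.toFinset_subset.2 (Multiset.subset_cons M x)) fun j _ hj => by
      rw [Multiset.count_eq_zero_of_notMem (mt Multiset.mem_toFinset.2 hj), Nat.factorial_zero]
  have herase : ∏ j ∈ (x ::ₘ M).toFinset.erase x, ((x ::ₘ M).count j).factorial =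
      ∏ j ∈ (x ::ₘ M).toFinset.erase x, (M.count j).factorial :=
    Finset.prod_congr rfl fun j hj => by
      rw [Multiset.count_cons_of_ne (Finset.ne_of_mem_erase hj)]
  rw [zpart, zpart, hM, ← Finset.mul_prod_erase _ _ hx, ← Finset.mul_prod_erase _ _ hx, herase,
    Multiset.prod_cons, Multiset.count_cons_self, Nat.factorial_succ]
  ring

theorem zpart_pos {M : Multiset ℕ} (h : ∀ x ∈ M, 0 < x) : 0 < zpart M :=
  Nat.mul_pos (Multiset.prod_pos h) (Finset.prod_pos fun _ _ => Nat.factorial_pos _)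

variable {ι : Type*} [DecidableEq ι] [Fintype ι] {n : ℕ}

theorem prod_zpart_single_add (i₀ : ι) (x : ℕ) (ν : ι → Multiset ℕ) :
    ∏ i, zpart ((Pi.single i₀ {x} + ν : ι → Multiset ℕ) i) =
      x * ((ν i₀).count x + 1) * ∏ i, zpart (ν i) := by
  rw [← Finset.mul_prod_erase _ _ (Finset.mem_univ i₀),
    ← Finset.mul_prod_erase _ (fun i => zpart (ν i)) (Finset.mem_univ i₀), Pi.add_apply,
    Pi.single_eq_same, Multiset.singleton_add, zpart_cons, mul_assoc _ (zpart _)]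
  refine congrArg _ (congrArg _ (Finset.prod_congr rfl fun i hi => ?_))
  rw [Pi.add_apply, Pi.single_eq_of_ne (Finset.ne_of_mem_erase hi), zero_add]

theorem card_fibers_succ (m : Fin (n + 1) → ℕ) (ν : ι → Multiset ℕ) :
    Nat.card {a : Fin (n + 1) → ι // fibers m a = ν} =
      ∑ i₀, Nat.card {a : Fin n → ι // Pi.single i₀ {m 0} + fibers (Fin.tail m) a = ν} := by
  rw [← Nat.card_sigma]
  refine Nat.card_congr
    { toFun := fun a => ⟨a.1 0, Fin.tail a.1, (fibers_succ m a.1).symm.trans a.2⟩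
      invFun := fun b => ⟨Fin.cons b.1 b.2.1, (fibers_succ m _).trans b.2.2⟩
      left_inv := fun a => Subtype.ext (Fin.cons_self_tail a.1)
      right_inv := fun _ => rfl }

theorem card_fibers_mul_prod_zpart (m : Fin n → ℕ) {ν : ι → Multiset ℕ}
    (h : ∑ i, ν i = ∑ j, {m j}) :
    Nat.card {a : Fin n → ι // fibers m a = ν} * ∏ i, zpart (ν i) = zpart (∑ i, ν i) := by
  induction n generalizing ν with
  | zero =>
    obtain rfl : ν = 0 := funext fun i => (Finset.sum_eq_zero_iff.1 h) i (Finset.mem_univ i)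
    have : Nat.card {a : Fin 0 → ι // fibers m a = 0} = 1 :=
      Nat.card_eq_one_iff_unique.2 ⟨inferInstance, ⟨⟨Fin.elim0, rfl⟩⟩⟩
    rw [this]
    simp [zpart]
  | succ n ih =>
    have hterm : ∀ i₀, Nat.card {a : Fin n → ι // Pi.single i₀ {m 0} + fibers (Fin.tail m) a = ν}
        * ∏ i, zpart (ν i) = m 0 * (ν i₀).count (m 0) * zpart (∑ j, {Fin.tail m j}) := fun i₀ => by
      by_cases hmem : m 0 ∈ ν i₀
      · have hle : Pi.single i₀ {m 0} ≤ ν :=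
          update_le_iff.2 ⟨Multiset.singleton_le.2 hmem, fun i _ => Multiset.zero_le (ν i)⟩
        obtain ⟨ν', rfl⟩ := exists_add_of_le hle
        have hν' : ∑ i, ν' i = ∑ j, {Fin.tail m j} := by
          simpa [Finset.sum_add_distrib, Fin.sum_univ_succ, Fin.tail] using h
        simp only [add_right_inj]
        rw [prod_zpart_single_add, mul_left_comm, ih _ hν', hν']
        simp
      · have : IsEmpty {a : Fin n → ι // Pi.single i₀ {m 0} + fibers (Fin.tail m) a = ν} :=
          ⟨fun a => hmem (a.2 ▸ by simp)⟩
        simp [Multiset.count_eq_zero_of_notMem hmem]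
    simp only [card_fibers_succ, Finset.sum_mul, hterm]
    rw [← Finset.sum_mul, ← Finset.mul_sum, ← Multiset.count_sum', h, Fin.sum_univ_succ,
      Multiset.singleton_add, zpart_cons, Multiset.count_cons_self]
    rfl

end Counting

section Omega

variable {k : ℕ} {κ : List ℕ} {m : Fin κ.length → ℕ} {a a' : Fin κ.length → Fin k}
  {P : Partition} {Q : Fin k → Partition} {ν : Fin k → List ℕ} {T T' : RHT P κ}
  {Ti : ∀ i, RHT (Q i) (ν i)}

theorem RHT.exists_chain_comp_gapRank {A : Partition} {l : List ℕ} {n : ℕ}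
    {e : Fin l.length → Fin n}
    (he : StrictMono e) {c : Fin (n + 1) → Partition} (hzero : c 0 = Partition.empty)
    (hlast : c (Fin.last n) = A) (hc : ∀ j, j ∉ Set.range e → c j.castSucc = c j.succ)
    (hstep : ∀ s, IsStep (c (e s).succ) (c (e s).castSucc) (l.get s)) :
    ∃ S : RHT A l, ∀ j, c j = S.chain (gapRank e j) := by
  let d : Fin (l.length + 1) → Partition := Fin.cons Partition.empty fun s => c (e s).succ
  have hd : ∀ j, c j = d (gapRank e j) := eq_comp_gapRank he hc hzero fun _ => rfl
  refine ⟨⟨d, rfl, ?_, fun s => ?_⟩, hd⟩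
  · rw [← hlast, hd, gapRank_last]
  · have := hstep s
    rwa [hd, hd, gapRank_castSucc_apply he, gapRank_succ_apply he] at this

theorem isStep_chain_gapRank {e : ∀ i, Fin (ν i).length → Fin κ.length}
    (he : ∀ i, IsFiberEnum a i (e i)) (hν : ∀ i s, (ν i).get s = m (e i s))
    (Ti : ∀ i, RHT (Q i) (ν i)) (j : Fin κ.length) :
    IsStep ((Ti (a j)).chain (gapRank (e (a j)) j.succ))
      ((Ti (a j)).chain (gapRank (e (a j)) j.castSucc)) (m j) := by
  obtain ⟨s, hs⟩ := (he (a j)).mem_range.2 rfl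
  have hstep := (Ti (a j)).step s
  rwa [hν, ← gapRank_succ_apply (he (a j)).strictMono, ← gapRank_castSucc_apply
    (he (a j)).strictMono, hs] at hstep

/-- The relation `ω(T) = (T₁,…,T_k)` for hooks of length `k * m j`, together with the label `a j`
of the member of the quotient from which the `j`-th hook of `T` is removed. -/
def OmegaVia (m : Fin κ.length → ℕ) (T : RHT P κ) (Ti : ∀ i, RHT (Q i) (ν i))
    (a : Fin κ.length → Fin k) : Prop :=
  ∃ e : ∀ i, Fin (ν i).length → Fin κ.length,
    (∀ i, IsFiberEnum a i (e i)) ∧ (∀ i s, (ν i).get s = m (e i s)) ∧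
      ∀ j, IsAlignedQuotient k (T.chain j) fun i => (Ti i).chain (gapRank (e i) j)

theorem OmegaVia.fibers_eq (h : OmegaVia m T Ti a) : fibers m a = fun i => ↑(ν i) := by
  obtain ⟨e, he, hν, -⟩ := h
  funext i
  have hcomp : m ∘ e i = (ν i).get := funext fun s => (hν i s).symm
  rw [fibers_eq_ofFn (he i), hcomp, List.ofFn_get]

theorem OmegaVia.label_unique (hm : ∀ j, 0 < m j) (h : OmegaVia m T Ti a)
    (h' : OmegaVia m T Ti a') : a = a' := by
  obtain ⟨e, he, hν, hT⟩ := h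
  obtain ⟨e', he', -, hT'⟩ := h'
  have heq : ∀ i j, (Ti i).chain (gapRank (e i) j) = (Ti i).chain (gapRank (e' i) j) :=
    fun i j => congrFun ((hT j).eq (hT' j)) i
  funext j
  by_contra hj
  refine (isStep_chain_gapRank he hν Ti j).ne (hm j) ?_
  rw [heq, heq, (he' _).gapRank_eq_of_ne hj]

variable [NeZero k]

theorem OmegaVia.tableau_unique (h : OmegaVia m T Ti a) (h' : OmegaVia m T' Ti a) : T = T' := by
  obtain ⟨e, he, -, hT⟩ := h
  obtain ⟨e', he', -, hT'⟩ := h'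
  obtain rfl : e = e' := funext fun i => (he i).eq (he' i)
  exact RHT.ext_chain fun j => (hT j).eq_left (hT' j)

theorem RHT.exists_isAlignedQuotient_chain (hκ : ∀ j, κ.get j = k * m j) (T : RHT P κ)
    (j : Fin (κ.length + 1)) : ∃ D : Fin k → Partition, IsAlignedQuotient k (T.chain j) D := by
  induction j using Fin.induction with
  | zero => exact ⟨_, T.chain_zero ▸ isAlignedQuotient_empty⟩
  | succ j ih =>
    obtain ⟨D, hD⟩ := ih
    exact hD.exists_of_isStep (hκ j ▸ T.step j)

theorem omegaRel_iff_exists_omegaVia (hκ : ∀ j, κ.get j = k * m j) :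
    OmegaRel k T Ti ↔ ∃ a, OmegaVia m T Ti a := by
  constructor
  · rintro ⟨D, a, hD, hconst, -, h⟩
    choose e hmono hlabel hsurj hν hzero hsucc using h
    have he : ∀ i, IsFiberEnum a i (e i) := fun i =>
      ⟨hmono i, fun {j} => ⟨by rintro ⟨s, rfl⟩; exact hlabel i s, hsurj i j⟩⟩
    refine ⟨a, e, he, fun i s => ?_, fun j => ?_⟩
    · exact Nat.eq_of_mul_eq_mul_left (NeZero.pos k) ((hν i s).trans (hκ _))
    · obtain ⟨D', hD'⟩ := T.exists_isAlignedQuotient_chain hκ j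
      convert hD' using 1
      rw [hD'.eq_of_isKQuotient (hD j)]
      funext i
      exact (eq_comp_gapRank (c := fun j => D j i) (hmono i)
        (fun j hj => hconst j i fun hi => hj ((he i).mem_range.2 hi.symm)) (hzero i).symm
        (fun s => (hsucc i s).symm) j).symm
  · rintro ⟨a, e, he, hν, hT⟩
    refine ⟨_, a, fun j => (hT j).isKQuotient, fun j i hi => ?_,
      fun j => ⟨m j, hκ j, isStep_chain_gapRank he hν Ti j⟩, fun i => ⟨e i, (he i).strictMono,
        (he i).label_apply, fun j => (he i).mem_range.2, fun s => ?_, ?_, fun s => ?_⟩⟩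
    · rw [(he i).gapRank_eq_of_ne hi]
    · rw [hκ, hν]
    · rw [gapRank_zero]
    · rw [gapRank_succ_apply (he i).strictMono]

theorem exists_tableau_omegaVia (hκ : ∀ j, κ.get j = k * m j) (hm : Antitone m)
    (hν : ∀ i, (ν i).Pairwise (· ≥ ·)) (hQ : IsAlignedQuotient k P Q)
    (Ti : ∀ i, RHT (Q i) (ν i)) (ha : fibers m a = fun i => ↑(ν i)) :
    ∃ T : RHT P κ, OmegaVia m T Ti a := by
  choose e he hget using fun i => exists_isFiberEnum hm (hν i) (congrFun ha i)
  have hne : ∀ j i, i ≠ a j → (Ti i).chain (gapRank (e i) j.succ) =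
      (Ti i).chain (gapRank (e i) j.castSucc) := fun j i hi => by
    rw [(he i).gapRank_eq_of_ne hi]
  have hC : ∀ j, ∃ C, IsAlignedQuotient k C fun i => (Ti i).chain (gapRank (e i) j) := fun j => by
    induction j using Fin.induction with
    | zero => exact ⟨_, by simpa only [gapRank_zero, RHT.chain_zero] using isAlignedQuotient_empty⟩
    | succ j ih =>
      obtain ⟨C, hC⟩ := ih
      exact hC.exists_of_isStep_quotient (hne j) (isStep_chain_gapRank he hget Ti j)
  choose C hC using hC
  refine ⟨⟨C, (hC 0).eq_left ?_, (hC _).eq_left ?_, fun j => ?_⟩, e, he, hget, hC⟩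
  · simpa only [gapRank_zero, RHT.chain_zero] using isAlignedQuotient_empty
  · simpa only [gapRank_last, RHT.chain_last] using hQ
  · rw [hκ]
    exact ((hC _).isStep_iff (hC _)).2 ⟨a j, hne j, isStep_chain_gapRank he hget Ti j⟩

theorem exists_omegaVia_sort (hκ : ∀ j, κ.get j = k * m j) (hm : Antitone m)
    (hQ : IsAlignedQuotient k P Q) (T : RHT P κ) :
    ∃ (a : Fin κ.length → Fin k) (Ti : ∀ i, RHT (Q i) ((fibers m a i).sort (· ≥ ·))),
      OmegaVia m T Ti a := by
  choose D hD using T.exists_isAlignedQuotient_chain (k := k) hκ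
  choose a hne hstep using fun j => ((hD _).isStep_iff (hD _)).1 (hκ j ▸ T.step j)
  choose e he hget using fun i => exists_isFiberEnum (a := a) (i := i) hm
    (Multiset.pairwise_sort (fibers m a i) (· ≥ ·)) (Multiset.sort_eq _ _).symm
  have hzero : D 0 = fun _ => Partition.empty :=
    (T.chain_zero ▸ hD 0).eq isAlignedQuotient_empty
  have hlast : D (Fin.last _) = Q := (T.chain_last ▸ hD (Fin.last _)).eq hQ
  choose Ti hTi using fun i => RHT.exists_chain_comp_gapRank (he i).strictMono
    (c := fun j => D j i) (congrFun hzero i) (congrFun hlast i)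
    (fun j hj => (hne j i fun hi => hj ((he i).mem_range.2 hi.symm)).symm)
    (fun s => by
      have := hstep (e i s)
      rwa [(he i).label_apply, ← hget] at this)
  refine ⟨a, Ti, e, he, hget, fun j => ?_⟩
  simpa only [← hTi] using hD j

theorem card_omegaRel_eq_card_fibers (hκ : ∀ j, κ.get j = k * m j) (hm : Antitone m)
    (hpos : ∀ j, 0 < m j) (hν : ∀ i, (ν i).Pairwise (· ≥ ·)) (hQ : IsAlignedQuotient k P Q)
    (Ti : ∀ i, RHT (Q i) (ν i)) :
    Nat.card {T : RHT P κ // OmegaRel k T Ti} =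
      Nat.card {a : Fin κ.length → Fin k // fibers m a = fun i => ↑(ν i)} := by
  choose label hlabel using fun T : {T : RHT P κ // OmegaRel k T Ti} =>
    (omegaRel_iff_exists_omegaVia hκ).1 T.2
  refine Nat.card_congr (Equiv.ofBijective (fun T => ⟨label T, (hlabel T).fibers_eq⟩) ⟨?_, ?_⟩)
  · intro T T' h
    have hlab : label T = label T' := Subtype.ext_iff.1 h
    exact Subtype.ext ((hlabel T).tableau_unique (hlab ▸ hlabel T'))
  · rintro ⟨a, ha⟩
    obtain ⟨T, hT⟩ := exists_tableau_omegaVia hκ hm hν hQ Ti ha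
    exact ⟨⟨T, (omegaRel_iff_exists_omegaVia hκ).2 ⟨a, hT⟩⟩,
      Subtype.ext ((hlabel _).label_unique hpos hT)⟩

theorem card_omegaRel_mul_prod_zpart (hκ : ∀ j, κ.get j = k * m j) (hm : Antitone m)
    (hpos : ∀ j, 0 < m j) (hν : ∀ i, (ν i).Pairwise (· ≥ ·)) (hQ : IsAlignedQuotient k P Q)
    (Ti : ∀ i, RHT (Q i) (ν i)) (hsum : ∑ i, (ν i : Multiset ℕ) = ∑ j, {m j}) :
    Nat.card {T : RHT P κ // OmegaRel k T Ti} * ∏ i, zpart (ν i) = zpart (∑ j, {m j}) := by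
  rw [card_omegaRel_eq_card_fibers hκ hm hpos hν hQ Ti, card_fibers_mul_prod_zpart m hsum, hsum]

theorem exists_omegaRel (hκ : ∀ j, κ.get j = k * m j) (hm : Antitone m)
    (hpos : ∀ j, 0 < m j) (hν : ∀ i, (ν i).Pairwise (· ≥ ·)) (hQ : IsAlignedQuotient k P Q)
    (Ti : ∀ i, RHT (Q i) (ν i)) (hsum : ∑ i, (ν i : Multiset ℕ) = ∑ j, {m j}) :
    ∃ T : RHT P κ, OmegaRel k T Ti := by
  have hz : 0 < zpart (∑ j, {m j}) := zpart_pos fun x hx => by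
    obtain ⟨j, -, hj⟩ := Multiset.mem_sum.1 hx
    exact Multiset.mem_singleton.1 hj ▸ hpos j
  rw [← card_omegaRel_mul_prod_zpart hκ hm hpos hν hQ Ti hsum] at hz
  obtain ⟨⟨T, hT⟩⟩ := (Nat.card_pos_iff.1 (Nat.pos_of_mul_pos_right hz)).1
  exact ⟨T, hT⟩

theorem exists_omegaRel_quotient (hκ : ∀ j, κ.get j = k * m j) (hm : Antitone m)
    (hQ : IsAlignedQuotient k P Q) (T : RHT P κ) :
    ∃ (ν : Fin k → List ℕ) (Ti : ∀ i, RHT (Q i) (ν i)),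
      (∀ i, (ν i).Pairwise (· ≥ ·)) ∧ ∑ i, (ν i : Multiset ℕ) = ∑ j, {m j} ∧
        OmegaRel k T Ti := by
  obtain ⟨a, Ti, h⟩ := exists_omegaVia_sort hκ hm hQ T
  refine ⟨_, Ti, fun i => Multiset.pairwise_sort _ _, ?_,
    (omegaRel_iff_exists_omegaVia hκ).2 ⟨a, h⟩⟩
  simp only [Multiset.sort_eq, sum_fibers]

end Omega

/-- let `λ` have empty `k`-core, `k`-quotient `(λ₁,…,λ_k)`, and
let `μ` be a partition with `|λ| = k|μ|`. The map `ω_{kμ}^λ` from `RHT_{kμ}^λ` to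
the union, over all `k`-tuples `(μ₁,…,μ_k)` of partitions with `|μᵢ| = |λᵢ|` and
`μ₁ ⊕ ⋯ ⊕ μ_k = μ`, of `RHT_{μ₁}^{λ₁} × ⋯ × RHT_{μ_k}^{λ_k}`, is (well defined
and) surjective, and each `k`-tuple `(T₁,…,T_k)` in its range has exactly
`z_μ/(z_{μ₁}⋯z_{μ_k})` preimages. -/
theorem omega_surjective_and_fiber_count (k p : ℕ) (hk : 2 ≤ k) (P : Partition)
    (Q : Fin k → Partition) (hsize : P.size = k * p)
    (hcore : IsKCore k P Partition.empty) (hQ : IsKQuotient k P Q)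
    (μ : List ℕ) (hμsort : μ.Pairwise (· ≥ ·)) (hμpos : ∀ x ∈ μ, 0 < x)
    (hμsum : μ.sum = p) :
    (∀ T : RHT P (μ.map fun x => k * x),
      ∃ (ν : Fin k → List ℕ) (Ti : ∀ i : Fin k, RHT (Q i) (ν i)),
        (∀ i, (ν i).Pairwise (· ≥ ·) ∧ (∀ x ∈ ν i, 0 < x) ∧ (ν i).sum = (Q i).size) ∧
        (∑ i : Fin k, ((ν i : Multiset ℕ)) = (μ : Multiset ℕ)) ∧
        OmegaRel k T Ti) ∧
    (∀ ν : Fin k → List ℕ,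
      (∀ i, (ν i).Pairwise (· ≥ ·) ∧ (∀ x ∈ ν i, 0 < x) ∧ (ν i).sum = (Q i).size) →
      (∑ i : Fin k, ((ν i : Multiset ℕ)) = (μ : Multiset ℕ)) →
      ∀ Ti : ∀ i : Fin k, RHT (Q i) (ν i),
        (∃ T : RHT P (μ.map fun x => k * x), OmegaRel k T Ti) ∧
        (Nat.card {T : RHT P (μ.map fun x => k * x) // OmegaRel k T Ti} : ℚ) =
          (zpart (μ : Multiset ℕ) : ℚ) /
            ∏ i : Fin k, (zpart ((ν i : Multiset ℕ)) : ℚ)) := by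
  have : NeZero k := ⟨by omega⟩
  have hQ' : IsAlignedQuotient k P Q := hQ.isAlignedQuotient hcore
  obtain ⟨m, hm, hκ, hsum⟩ := exists_antitone_get_map (k * ·) hμsort
  have hpos : ∀ j, 0 < m j := fun j => hμpos _ <| Multiset.mem_coe.1 <|
    hsum ▸ Multiset.mem_sum.2 ⟨j, Finset.mem_univ j, Multiset.mem_singleton_self _⟩
  rw [← hsum]
  refine ⟨fun T => ?_, fun ν hν hνsum Ti => ?_⟩
  · obtain ⟨ν, Ti, hν, hνsum, h⟩ := exists_omegaRel_quotient hκ hm hQ' T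
    refine ⟨ν, Ti, fun i => ⟨hν i, fun x hx => hμpos x ?_, (Ti i).sum_eq_size⟩, hνsum, h⟩
    rw [← Multiset.mem_coe, ← hsum, ← hνsum]
    exact Multiset.mem_sum.2 ⟨i, Finset.mem_univ i, hx⟩
  · have hsorted := fun i => (hν i).1
    refine ⟨exists_omegaRel hκ hm hpos hsorted hQ' Ti hνsum, (eq_div_iff ?_).2 ?_⟩
    · exact Finset.prod_ne_zero_iff.2 fun i _ => Nat.cast_ne_zero.2 (zpart_pos (hν i).2.1).ne'
    · exact_mod_cast card_omegaRel_mul_prod_zpart hκ hm hpos hsorted hQ' Ti hνsum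

end RimHookPaper
end
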